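/- arXiv:2209.08586 — 2 statements merged into one kernel-verified Lean document; each statement's English description precedes it below -/
import Mathlib

section
/- Let {X_n, n≥1} be a sequence of random variables on a probability space satisfying the φ-mixing condition (1) with rate r>2 and constant C>0, and the moment condition (2) with exponent α ∈ (0,1) and ν_α = sup_{n≥1} E|X_n|^{1+α}. For b>0 let Z_k(b) = X_k·1(|X_k|>b) − E(X_k·1(|X_k|>b)) denote the centered tail parts. Then there is a positive constant c_α, not depending on n or b, such that for all n≥1 and all b>0, E|Σ_{k=1}^n Z_k(b)|^{1+α} ≤ 2^{1+α} c_α ν_α n. -/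
open MeasureTheory ProbabilityTheory Finset

noncomputable def phiCoef {Ω : Type*} [MeasurableSpace Ω] (μ : Measure Ω)
    (X : ℕ → Ω → ℝ) (m : ℕ) : ℝ :=
  sSup {x : ℝ | ∃ k : ℕ, 1 ≤ k ∧ ∃ A B : Set Ω,
    MeasurableSet[⨆ i ∈ Set.Icc 1 k, MeasurableSpace.comap (X i) inferInstance] A ∧
    MeasurableSet[⨆ i ∈ Set.Ici (k + m), MeasurableSpace.comap (X i) inferInstance] B ∧
    0 < μ A ∧
    x = |(μ (B ∩ A)).toReal / (μ A).toReal - (μ B).toReal|}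

noncomputable def phiSum {Ω : Type*} [MeasurableSpace Ω] (μ : Measure Ω)
    (X : ℕ → Ω → ℝ) : ℝ :=
  ∑' m : ℕ, Real.sqrt (phiCoef μ X (m + 1))

noncomputable def tailPart {Ω : Type*} [MeasurableSpace Ω] (μ : Measure Ω)
    (X : ℕ → Ω → ℝ) (b : ℝ) (k : ℕ) (ω : Ω) : ℝ :=
  (if b < |X k ω| then X k ω else 0) - ∫ ω', (if b < |X k ω'| then X k ω' else 0) ∂μ

noncomputable def mainPart {Ω : Type*} [MeasurableSpace Ω] (μ : Measure Ω)
    (X : ℕ → Ω → ℝ) (b : ℝ) (k : ℕ) (ω : Ω) : ℝ :=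
  (if |X k ω| ≤ b then X k ω else 0) - ∫ ω', (if |X k ω'| ≤ b then X k ω' else 0) ∂μ

theorem sum_measureReal_preimage_singleton_inter {Ω β : Type*} [MeasurableSpace Ω]
    [MeasurableSpace β] [MeasurableSingletonClass β] (μ : Measure Ω) [IsFiniteMeasure μ]
    {U : Ω → β} (hU : Measurable U) (R : Finset β) {D : Set Ω} (hD : MeasurableSet D) :
    ∑ a ∈ R, μ.real (U ⁻¹' {a} ∩ D) = μ.real (U ⁻¹' (R : Set β) ∩ D) := by
  rw [← measureReal_biUnion_finset]
  · congr 1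
    ext ω
    simp
  · intro a _ b _ hab
    refine Set.disjoint_left.2 fun ω h1 h2 => hab ?_
    exact h1.1.symm.trans h2.1
  · exact fun a _ => (hU (measurableSet_singleton a)).inter hD

theorem integral_comp_eq_sum_of_mem {Ω β : Type*} [MeasurableSpace Ω]
    [MeasurableSpace β] [MeasurableSingletonClass β] (μ : Measure Ω) [IsFiniteMeasure μ]
    {U : Ω → β} (hU : Measurable U) (R : Finset β) (hR : ∀ ω, U ω ∈ R) (F : β → ℝ) :
    ∫ ω, F (U ω) ∂μ = ∑ a ∈ R, F a * μ.real (U ⁻¹' {a}) := by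
  classical
  have h : ∀ ω, F (U ω) = ∑ a ∈ R, (U ⁻¹' {a}).indicator (fun _ => F a) ω := by
    intro ω
    rw [Finset.sum_eq_single (U ω)]
    · simp
    · intro b _ hb
      simp [Ne.symm hb]
    · exact fun h => absurd (hR ω) h
  simp_rw [h]
  rw [integral_finsetSum]
  · refine Finset.sum_congr rfl fun a _ => ?_
    rw [integral_indicator_const _ (hU (measurableSet_singleton a)), smul_eq_mul, mul_comm]
  · exact fun a _ => (integrable_const _).indicator (hU (measurableSet_singleton a))

/-- Covariance inequality for simple functions of two random variables whose `φ`-dependence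
coefficient is at most `s ^ 2`. -/
theorem abs_cov_simpleFunc_le {Ω : Type*} [MeasurableSpace Ω] (μ : Measure Ω)
    [IsProbabilityMeasure μ] {X Y : Ω → ℝ} (hX : Measurable X) (hY : Measurable Y)
    {s : ℝ} (hs : 0 < s)
    (H : ∀ S T : Set ℝ, MeasurableSet S → MeasurableSet T →
      |μ.real (X ⁻¹' S ∩ Y ⁻¹' T) - μ.real (X ⁻¹' S) * μ.real (Y ⁻¹' T)|
        ≤ s ^ 2 * μ.real (X ⁻¹' S))
    (f g : SimpleFunc ℝ ℝ) :
    |∫ ω, f (X ω) * g (Y ω) ∂μ - (∫ ω, f (X ω) ∂μ) * ∫ ω, g (Y ω) ∂μ|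
      ≤ s * (∫ ω, f (X ω) ^ 2 ∂μ + ∫ ω, g (Y ω) ^ 2 ∂μ) := by
  classical
  set U : Ω → ℝ := fun ω => f (X ω) with hUdef
  set V : Ω → ℝ := fun ω => g (Y ω) with hVdef
  have hU : Measurable U := f.measurable.comp hX
  have hV : Measurable V := g.measurable.comp hY
  have hUr : ∀ ω, U ω ∈ f.range := fun ω => SimpleFunc.mem_range_self _ _
  have hVr : ∀ ω, V ω ∈ g.range := fun ω => SimpleFunc.mem_range_self _ _
  set p : ℝ → ℝ := fun a => μ.real (U ⁻¹' {a}) with hp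
  set q : ℝ → ℝ := fun b => μ.real (V ⁻¹' {b}) with hq
  set j : ℝ → ℝ → ℝ := fun a b => μ.real (U ⁻¹' {a} ∩ V ⁻¹' {b}) with hj
  have hp0 : ∀ a, 0 ≤ p a := fun a => measureReal_nonneg
  have hq0 : ∀ a, 0 ≤ q a := fun a => measureReal_nonneg
  have hj0 : ∀ a b, 0 ≤ j a b := fun a b => measureReal_nonneg
  have eU : ∀ F : ℝ → ℝ, ∫ ω, F (U ω) ∂μ = ∑ a ∈ f.range, F a * p a :=
    fun F => integral_comp_eq_sum_of_mem μ hU _ hUr F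
  have eV : ∀ F : ℝ → ℝ, ∫ ω, F (V ω) ∂μ = ∑ b ∈ g.range, F b * q b :=
    fun F => integral_comp_eq_sum_of_mem μ hV _ hVr F
  have eUV : ∫ ω, U ω * V ω ∂μ = ∑ a ∈ f.range, ∑ b ∈ g.range, a * b * j a b := by
    have := integral_comp_eq_sum_of_mem μ (hU.prodMk hV) (f.range ×ˢ g.range)
      (fun ω => Finset.mem_product.2 ⟨hUr ω, hVr ω⟩) (fun z => z.1 * z.2)
    rw [Finset.sum_product] at this
    rw [this]
    refine Finset.sum_congr rfl fun a _ => Finset.sum_congr rfl fun b _ => ?_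
    simp only [hj]
    congr 2
    ext ω
    simp [Prod.ext_iff]
  have row : ∀ a, ∑ b ∈ g.range, |j a b - p a * q b| ≤ 2 * s ^ 2 * p a := by
    intro a
    have key : ∀ R : Finset ℝ, |∑ b ∈ R, (j a b - p a * q b)| ≤ s ^ 2 * p a := by
      intro R
      have h1 : ∑ b ∈ R, j a b = μ.real (U ⁻¹' {a} ∩ V ⁻¹' (R : Set ℝ)) := by
        have := sum_measureReal_preimage_singleton_inter μ hV R
          (hU (measurableSet_singleton a))
        simp only [hj]
        rw [Set.inter_comm, ← this]
        exact Finset.sum_congr rfl fun b _ => by rw [Set.inter_comm]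
      have h2 : ∑ b ∈ R, q b = μ.real (V ⁻¹' (R : Set ℝ)) := by
        simpa using sum_measureReal_preimage_singleton_inter μ hV R MeasurableSet.univ
      rw [Finset.sum_sub_distrib, ← Finset.mul_sum, h1, h2]
      exact H (f ⁻¹' {a}) (g ⁻¹' R) (f.measurableSet_preimage _) (g.measurableSet_preimage _)
    rw [← Finset.sum_filter_add_sum_filter_not g.range (fun b => 0 ≤ j a b - p a * q b)]
    have e1 : ∑ b ∈ g.range with 0 ≤ j a b - p a * q b, |j a b - p a * q b|
        = ∑ b ∈ g.range with 0 ≤ j a b - p a * q b, (j a b - p a * q b) :=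
      Finset.sum_congr rfl fun b hb => abs_of_nonneg (Finset.mem_filter.1 hb).2
    have e2 : ∑ b ∈ g.range with ¬ 0 ≤ j a b - p a * q b, |j a b - p a * q b|
        = -∑ b ∈ g.range with ¬ 0 ≤ j a b - p a * q b, (j a b - p a * q b) := by
      rw [← Finset.sum_neg_distrib]
      exact Finset.sum_congr rfl fun b hb =>
        abs_of_neg (not_le.1 (Finset.mem_filter.1 hb).2)
    rw [e1, e2]
    have k1 := (abs_le.1 (key {b ∈ g.range | 0 ≤ j a b - p a * q b})).2
    have k2 := (abs_le.1 (key {b ∈ g.range | ¬ 0 ≤ j a b - p a * q b})).1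
    linarith
  have col : ∀ b, ∑ a ∈ f.range, |j a b - p a * q b| ≤ 2 * q b := by
    intro b
    have h1 : ∑ a ∈ f.range, j a b ≤ q b := by
      simp only [hj]
      rw [sum_measureReal_preimage_singleton_inter μ hU _ (hV (measurableSet_singleton b))]
      exact measureReal_mono Set.inter_subset_right
    have h2 : ∑ a ∈ f.range, p a ≤ 1 := by
      have := sum_measureReal_preimage_singleton_inter μ hU f.range MeasurableSet.univ
      simp only [Set.inter_univ] at this
      rw [this]
      exact measureReal_le_one
    calc ∑ a ∈ f.range, |j a b - p a * q b|
        ≤ ∑ a ∈ f.range, (j a b + p a * q b) := Finset.sum_le_sum fun a _ =>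
          (abs_sub _ _).trans (by
            rw [abs_of_nonneg (hj0 a b), abs_of_nonneg (mul_nonneg (hp0 a) (hq0 b))])
      _ = ∑ a ∈ f.range, j a b + (∑ a ∈ f.range, p a) * q b := by
          rw [Finset.sum_add_distrib, Finset.sum_mul]
      _ ≤ 2 * q b := by nlinarith [hq0 b]
  have pt : ∀ a b d : ℝ, |a * b * d| ≤ a ^ 2 / (2 * s) * |d| + s / 2 * b ^ 2 * |d| := by
    intro a b d
    rw [abs_mul, ← add_mul]
    refine mul_le_mul_of_nonneg_right ?_ (abs_nonneg d)
    have : a ^ 2 / (2 * s) + s / 2 * b ^ 2 - |a * b| = (|a| - s * |b|) ^ 2 / (2 * s) := by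
      rw [abs_mul, ← sq_abs a, ← sq_abs b]
      field_simp
      ring
    have : 0 ≤ (|a| - s * |b|) ^ 2 / (2 * s) := by positivity
    linarith
  have eC : ∫ ω, U ω * V ω ∂μ - (∫ ω, U ω ∂μ) * ∫ ω, V ω ∂μ
      = ∑ a ∈ f.range, ∑ b ∈ g.range, a * b * (j a b - p a * q b) := by
    rw [eUV, eU (fun x => x), eV (fun x => x), Finset.sum_mul_sum, ← Finset.sum_sub_distrib]
    refine Finset.sum_congr rfl fun a _ => ?_
    rw [← Finset.sum_sub_distrib]
    exact Finset.sum_congr rfl fun b _ => by ring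
  change |∫ ω, U ω * V ω ∂μ - (∫ ω, U ω ∂μ) * ∫ ω, V ω ∂μ| ≤
    s * (∫ ω, U ω ^ 2 ∂μ + ∫ ω, V ω ^ 2 ∂μ)
  rw [eC, eU (fun x => x ^ 2), eV (fun x => x ^ 2)]
  calc |∑ a ∈ f.range, ∑ b ∈ g.range, a * b * (j a b - p a * q b)|
      ≤ ∑ a ∈ f.range, ∑ b ∈ g.range, |a * b * (j a b - p a * q b)| :=
        (Finset.abs_sum_le_sum_abs _ _).trans
          (Finset.sum_le_sum fun a _ => Finset.abs_sum_le_sum_abs _ _)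
    _ ≤ ∑ a ∈ f.range, ∑ b ∈ g.range, (a ^ 2 / (2 * s) * |j a b - p a * q b| +
          s / 2 * b ^ 2 * |j a b - p a * q b|) :=
        Finset.sum_le_sum fun a _ => Finset.sum_le_sum fun b _ => pt _ _ _
    _ = ∑ a ∈ f.range, a ^ 2 / (2 * s) * ∑ b ∈ g.range, |j a b - p a * q b| +
          ∑ b ∈ g.range, s / 2 * b ^ 2 * ∑ a ∈ f.range, |j a b - p a * q b| := by
        simp_rw [Finset.sum_add_distrib, Finset.mul_sum]
        congr 1
        exact Finset.sum_comm
    _ ≤ ∑ a ∈ f.range, a ^ 2 / (2 * s) * (2 * s ^ 2 * p a) +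
          ∑ b ∈ g.range, s / 2 * b ^ 2 * (2 * q b) := by
        refine add_le_add (Finset.sum_le_sum fun a _ => ?_) (Finset.sum_le_sum fun b _ => ?_)
        · exact mul_le_mul_of_nonneg_left (row a) (by positivity)
        · exact mul_le_mul_of_nonneg_left (col b) (by positivity)
    _ = s * (∑ a ∈ f.range, a ^ 2 * p a + ∑ b ∈ g.range, b ^ 2 * q b) := by
        rw [mul_add, Finset.mul_sum, Finset.mul_sum]
        congr 1
        · exact Finset.sum_congr rfl fun a _ => by field_simp
        · exact Finset.sum_congr rfl fun b _ => by ring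

/-- Covariance inequality for bounded functions of two random variables whose `φ`-dependence
coefficient is at most `s ^ 2`. -/
theorem abs_cov_le_of_bounded {Ω : Type*} [MeasurableSpace Ω] (μ : Measure Ω)
    [IsProbabilityMeasure μ] {X Y : Ω → ℝ} (hX : Measurable X) (hY : Measurable Y)
    {s : ℝ} (hs : 0 < s)
    (H : ∀ S T : Set ℝ, MeasurableSet S → MeasurableSet T →
      |μ.real (X ⁻¹' S ∩ Y ⁻¹' T) - μ.real (X ⁻¹' S) * μ.real (Y ⁻¹' T)|
        ≤ s ^ 2 * μ.real (X ⁻¹' S))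
    {f g : ℝ → ℝ} (hf : Measurable f) (hg : Measurable g) {M : ℝ}
    (hfM : ∀ x, |f x| ≤ M) (hgM : ∀ x, |g x| ≤ M) :
    |∫ ω, f (X ω) * g (Y ω) ∂μ - (∫ ω, f (X ω) ∂μ) * ∫ ω, g (Y ω) ∂μ|
      ≤ s * (∫ ω, f (X ω) ^ 2 ∂μ + ∫ ω, g (Y ω) ^ 2 ∂μ) := by
  have hM : 0 ≤ M := (abs_nonneg _).trans (hfM 0)
  have hfs := hf.stronglyMeasurable
  have hgs := hg.stronglyMeasurable
  set F := hfs.approxBounded M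
  set G := hgs.approxBounded M
  have bF : ∀ n x, |F n x| ≤ M := fun n x => hfs.norm_approxBounded_le hM n x
  have bG : ∀ n x, |G n x| ≤ M := fun n x => hgs.norm_approxBounded_le hM n x
  have tF : ∀ x, Filter.Tendsto (fun n => F n x) Filter.atTop (nhds (f x)) :=
    fun x => hfs.tendsto_approxBounded_of_norm_le (hfM x)
  have tG : ∀ x, Filter.Tendsto (fun n => G n x) Filter.atTop (nhds (g x)) :=
    fun x => hgs.tendsto_approxBounded_of_norm_le (hgM x)
  have mF : ∀ n, Measurable fun ω => F n (X ω) := fun n => (F n).measurable.comp hX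
  have mG : ∀ n, Measurable fun ω => G n (Y ω) := fun n => (G n).measurable.comp hY
  have lim : ∀ (A : ℕ → Ω → ℝ) (B : Ω → ℝ) (c : ℝ), (∀ n, Measurable (A n)) →
      (∀ n ω, |A n ω| ≤ c) →
      (∀ ω, Filter.Tendsto (fun n => A n ω) Filter.atTop (nhds (B ω))) →
      Filter.Tendsto (fun n => ∫ ω, A n ω ∂μ) Filter.atTop (nhds (∫ ω, B ω ∂μ)) := by
    intro A B c hA hc hAB
    exact tendsto_integral_of_dominated_convergence (fun _ => c)
      (fun n => (hA n).aestronglyMeasurable) (integrable_const c)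
      (fun n => Filter.Eventually.of_forall (hc n)) (Filter.Eventually.of_forall hAB)
  have l1 := lim (fun n ω => F n (X ω) * G n (Y ω)) (fun ω => f (X ω) * g (Y ω)) (M * M)
    (fun n => (mF n).mul (mG n))
    (fun n ω => by
      rw [abs_mul]
      exact mul_le_mul (bF n _) (bG n _) (abs_nonneg _) hM)
    (fun ω => (tF _).mul (tG _))
  have l2 := lim (fun n ω => F n (X ω)) (fun ω => f (X ω)) M mF (fun n ω => bF n _)
    (fun ω => tF _)
  have l3 := lim (fun n ω => G n (Y ω)) (fun ω => g (Y ω)) M mG (fun n ω => bG n _)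
    (fun ω => tG _)
  have l4 := lim (fun n ω => F n (X ω) ^ 2) (fun ω => f (X ω) ^ 2) (M ^ 2)
    (fun n => (mF n).pow_const 2)
    (fun n ω => by
      rw [abs_pow]
      exact pow_le_pow_left₀ (abs_nonneg _) (bF n _) 2)
    (fun ω => (tF _).pow 2)
  have l5 := lim (fun n ω => G n (Y ω) ^ 2) (fun ω => g (Y ω) ^ 2) (M ^ 2)
    (fun n => (mG n).pow_const 2)
    (fun n ω => by
      rw [abs_pow]
      exact pow_le_pow_left₀ (abs_nonneg _) (bG n _) 2)
    (fun ω => (tG _).pow 2)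
  exact le_of_tendsto_of_tendsto' (l1.sub (l2.mul l3)).abs ((l4.add l5).const_mul s)
    fun n => abs_cov_simpleFunc_le μ hX hY hs H (F n) (G n)

/-- The dependence between `X i` and `X (i + m)` is controlled by the mixing coefficient. -/
theorem abs_measureReal_inter_sub_le_phiCoef {Ω : Type*} [MeasurableSpace Ω] (μ : Measure Ω)
    [IsProbabilityMeasure μ] (X : ℕ → Ω → ℝ) {i : ℕ} (hi : 1 ≤ i) (m : ℕ)
    {S T : Set ℝ} (hS : MeasurableSet S) (hT : MeasurableSet T) :
    |μ.real (X i ⁻¹' S ∩ X (i + m) ⁻¹' T) - μ.real (X i ⁻¹' S) * μ.real (X (i + m) ⁻¹' T)|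
      ≤ phiCoef μ X m * μ.real (X i ⁻¹' S) := by
  set A := X i ⁻¹' S with hA
  set B := X (i + m) ⁻¹' T with hB
  rcases eq_or_ne (μ A) 0 with h0 | h0
  · have h1 : μ.real A = 0 := by simp [measureReal_def, h0]
    have h2 : μ.real (A ∩ B) = 0 := by
      simp [measureReal_def, measure_mono_null Set.inter_subset_left h0]
    simp [h1, h2]
  have hpos : 0 < μ.real A := ENNReal.toReal_pos h0 (measure_ne_top _ _)
  have hle : |(μ (B ∩ A)).toReal / (μ A).toReal - (μ B).toReal| ≤ phiCoef μ X m := by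
    refine le_csSup ⟨1, ?_⟩ ⟨i, hi, A, B, ?_, ?_, pos_iff_ne_zero.2 h0, rfl⟩
    · rintro x ⟨k, -, A', B', -, -, hA', rfl⟩
      have a1 : 0 < (μ A').toReal := ENNReal.toReal_pos hA'.ne' (measure_ne_top _ _)
      have a2 : (μ (B' ∩ A')).toReal / (μ A').toReal ≤ 1 :=
        (div_le_one a1).2 (measureReal_mono (μ := μ) Set.inter_subset_right)
      have a3 : 0 ≤ (μ (B' ∩ A')).toReal / (μ A').toReal := by positivity
      have a4 : (μ B').toReal ≤ 1 := measureReal_le_one (μ := μ)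
      have a5 : 0 ≤ (μ B').toReal := ENNReal.toReal_nonneg
      exact abs_le.2 ⟨by linarith, by linarith⟩
    · exact le_iSup₂ (f := fun j (_ : j ∈ Set.Icc 1 i) =>
        MeasurableSpace.comap (X j) inferInstance) i ⟨hi, le_rfl⟩ _ ⟨S, hS, rfl⟩
    · exact le_iSup₂ (f := fun j (_ : j ∈ Set.Ici (i + m)) =>
        MeasurableSpace.comap (X j) inferInstance) (i + m) Set.self_mem_Ici _ ⟨T, hT, rfl⟩
  rw [Set.inter_comm]
  have e : μ.real (B ∩ A) - μ.real A * μ.real B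
      = ((μ (B ∩ A)).toReal / (μ A).toReal - (μ B).toReal) * μ.real A := by
    simp only [measureReal_def] at hpos ⊢
    field_simp
  rw [e, abs_mul, abs_of_pos hpos]
  exact mul_le_mul_of_nonneg_right hle hpos.le

theorem sum_comp_natDist_le_two_mul_tsum {w : ℕ → ℝ} (hw : ∀ m, 0 ≤ w m) (hsum : Summable w)
    (s : Finset ℕ) (i : ℕ) : ∑ j ∈ s, w (Nat.dist i j) ≤ 2 * ∑' m, w m := by
  have bound : ∀ R : Finset ℕ, Set.InjOn (Nat.dist i) R →
      ∑ j ∈ R, w (Nat.dist i j) ≤ ∑' m, w m := by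
    intro R hR
    rw [← Finset.sum_image (f := w) hR]
    exact hsum.sum_le_tsum _ fun m _ => hw m
  rw [← Finset.sum_filter_add_sum_filter_not s (fun j => j ≤ i), two_mul]
  refine add_le_add (bound _ ?_) (bound _ ?_)
  · intro a ha b hb hab
    simp only [Finset.coe_filter, Set.mem_ofPred_eq] at ha hb
    simp only [Nat.dist] at hab
    omega
  · intro a ha b hb hab
    simp only [Finset.coe_filter, Set.mem_ofPred_eq] at ha hb
    simp only [Nat.dist] at hab
    omega

/-- Variance bound for partial sums of a bounded function of a weakly dependent sequence. -/
theorem integral_sq_sum_centered_le {Ω : Type*} [MeasurableSpace Ω] (μ : Measure Ω)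
    [IsProbabilityMeasure μ] {X : ℕ → Ω → ℝ} (hX : ∀ n, Measurable (X n))
    {w : ℕ → ℝ} (hw : ∀ m, 0 < w m) (hw0 : 1 ≤ w 0) (hsum : Summable w)
    (hmix : ∀ m, 1 ≤ m → phiCoef μ X m ≤ w m ^ 2)
    {f : ℝ → ℝ} (hf : Measurable f) {M : ℝ} (hfM : ∀ x, |f x| ≤ M) (n : ℕ) :
    ∫ ω, (∑ k ∈ Finset.Icc 1 n, (f (X k ω) - ∫ ω', f (X k ω') ∂μ)) ^ 2 ∂μ
      ≤ 4 * (∑' m, w m) * ∑ k ∈ Finset.Icc 1 n, ∫ ω, f (X k ω) ^ 2 ∂μ := by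
  have hM : 0 ≤ M := (abs_nonneg _).trans (hfM 0)
  set e : ℕ → ℝ := fun k => ∫ ω, f (X k ω) ∂μ
  set v : ℕ → ℝ := fun k => ∫ ω, f (X k ω) ^ 2 ∂μ with hv
  have hv0 : ∀ k, 0 ≤ v k := fun k => integral_nonneg fun ω => sq_nonneg _
  have mf : ∀ k, Measurable fun ω => f (X k ω) := fun k => hf.comp (hX k)
  have intf : ∀ k, Integrable (fun ω => f (X k ω)) μ := fun k =>
    Integrable.of_bound (mf k).aestronglyMeasurable M
      (Filter.Eventually.of_forall fun ω => hfM _)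
  have intff : ∀ i j, Integrable (fun ω => f (X i ω) * f (X j ω)) μ := fun i j =>
    Integrable.of_bound ((mf i).mul (mf j)).aestronglyMeasurable (M * M)
      (Filter.Eventually.of_forall fun ω => by
        rw [Real.norm_eq_abs, abs_mul]
        exact mul_le_mul (hfM _) (hfM _) (abs_nonneg _) hM)
  have expand : ∀ i j ω, (f (X i ω) - e i) * (f (X j ω) - e j)
      = f (X i ω) * f (X j ω) - e j * f (X i ω) - e i * f (X j ω) + e i * e j := by
    intros; ring
  have intc : ∀ i j, Integrable (fun ω => (f (X i ω) - e i) * (f (X j ω) - e j)) μ := by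
    intro i j
    simp_rw [expand]
    exact (((intff i j).sub ((intf i).const_mul _)).sub ((intf j).const_mul _)).add
      (integrable_const _)
  have cov : ∀ i j, ∫ ω, (f (X i ω) - e i) * (f (X j ω) - e j) ∂μ
      = ∫ ω, f (X i ω) * f (X j ω) ∂μ - e i * e j := by
    intro i j
    have int₁ : Integrable (fun ω => f (X i ω) * f (X j ω) - e j * f (X i ω)) μ :=
      (intff i j).sub ((intf i).const_mul _)
    have int₂ : Integrable
        (fun ω => f (X i ω) * f (X j ω) - e j * f (X i ω) - e i * f (X j ω)) μ :=
      int₁.sub ((intf j).const_mul _)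
    simp_rw [expand]
    rw [integral_add int₂ (integrable_const _), integral_sub int₁
      ((intf j).const_mul _), integral_sub (intff i j) ((intf i).const_mul _),
      integral_const_mul, integral_const_mul]
    simp only [integral_const, probReal_univ, one_smul]
    change _ - e j * e i - e i * e j + e i * e j = _
    ring
  have forward : ∀ i, 1 ≤ i → ∀ m, 1 ≤ m →
      |∫ ω, f (X i ω) * f (X (i + m) ω) ∂μ - e i * e (i + m)| ≤ w m * (v i + v (i + m)) :=
    fun i hi m hm => abs_cov_le_of_bounded μ (hX i) (hX (i + m)) (hw m)
      (fun S T hS hT => (abs_measureReal_inter_sub_le_phiCoef μ X hi m hS hT).trans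
        (mul_le_mul_of_nonneg_right (hmix m hm) measureReal_nonneg)) hf hf hfM hfM
  have covle : ∀ i, 1 ≤ i → ∀ j, 1 ≤ j →
      ∫ ω, (f (X i ω) - e i) * (f (X j ω) - e j) ∂μ ≤ w (Nat.dist i j) * (v i + v j) := by
    intro i hi j hj
    rw [cov]
    rcases lt_trichotomy i j with h | h | h
    · obtain ⟨m, rfl⟩ := Nat.exists_eq_add_of_lt h
      have := forward i hi (m + 1) (by omega)
      have hd : Nat.dist i (i + m + 1) = m + 1 := by simp only [Nat.dist]; omega
      rw [hd]
      exact (le_abs_self _).trans this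
    · subst h
      have h1 : ∫ ω, f (X i ω) * f (X i ω) ∂μ = v i := by
        simp only [hv, sq]
      rw [h1, Nat.dist_self]
      nlinarith [hv0 i, sq_nonneg (e i)]
    · obtain ⟨m, rfl⟩ := Nat.exists_eq_add_of_lt h
      have := forward j hj (m + 1) (by omega)
      have hd : Nat.dist (j + m + 1) j = m + 1 := by simp only [Nat.dist]; omega
      rw [hd, add_comm (v _)]
      simp_rw [mul_comm (f (X (j + m + 1) _))]
      rw [mul_comm (e (j + m + 1))]
      exact (le_abs_self _).trans this
  have sq_eq : ∀ ω, (∑ k ∈ Finset.Icc 1 n, (f (X k ω) - e k)) ^ 2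
      = ∑ i ∈ Finset.Icc 1 n, ∑ j ∈ Finset.Icc 1 n,
        (f (X i ω) - e i) * (f (X j ω) - e j) := by
    intro ω
    rw [sq, Finset.sum_mul_sum]
  change ∫ ω, (∑ k ∈ Finset.Icc 1 n, (f (X k ω) - e k)) ^ 2 ∂μ
    ≤ 4 * (∑' m, w m) * ∑ k ∈ Finset.Icc 1 n, v k
  simp_rw [sq_eq]
  rw [integral_finsetSum _ fun i _ => integrable_finsetSum _ fun j _ => intc i j,
    Finset.sum_congr rfl fun i _ => integral_finsetSum _ fun j _ => intc i j]
  have rowsum : ∀ i, ∑ j ∈ Finset.Icc 1 n, w (Nat.dist i j) ≤ 2 * ∑' m, w m :=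
    sum_comp_natDist_le_two_mul_tsum (fun m => (hw m).le) hsum _
  calc ∑ i ∈ Finset.Icc 1 n, ∑ j ∈ Finset.Icc 1 n,
        ∫ ω, (f (X i ω) - e i) * (f (X j ω) - e j) ∂μ
      ≤ ∑ i ∈ Finset.Icc 1 n, ∑ j ∈ Finset.Icc 1 n, w (Nat.dist i j) * (v i + v j) :=
        Finset.sum_le_sum fun i hi => Finset.sum_le_sum fun j hj =>
          covle i (Finset.mem_Icc.1 hi).1 j (Finset.mem_Icc.1 hj).1
    _ = ∑ i ∈ Finset.Icc 1 n, v i * ∑ j ∈ Finset.Icc 1 n, w (Nat.dist i j) +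
        ∑ j ∈ Finset.Icc 1 n, v j * ∑ i ∈ Finset.Icc 1 n, w (Nat.dist j i) := by
        simp_rw [mul_add, Finset.sum_add_distrib, Finset.mul_sum]
        congr 1
        · exact Finset.sum_congr rfl fun i _ => Finset.sum_congr rfl fun j _ => mul_comm _ _
        · rw [Finset.sum_comm]
          exact Finset.sum_congr rfl fun i _ => Finset.sum_congr rfl fun j _ => by
            rw [mul_comm, Nat.dist_comm]
    _ ≤ ∑ i ∈ Finset.Icc 1 n, v i * (2 * ∑' m, w m) +
        ∑ j ∈ Finset.Icc 1 n, v j * (2 * ∑' m, w m) :=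
        add_le_add
          (Finset.sum_le_sum fun i _ => mul_le_mul_of_nonneg_left (rowsum i) (hv0 i))
          (Finset.sum_le_sum fun i _ => mul_le_mul_of_nonneg_left (rowsum i) (hv0 i))
    _ = 4 * (∑' m, w m) * ∑ k ∈ Finset.Icc 1 n, v k := by
        rw [← Finset.sum_mul]
        ring

/-- The function `y ↦ min (|y| / t, y ^ 2 / t ^ 2)`. -/
noncomputable def quadLin (t y : ℝ) : ℝ := if |y| ≤ t then y ^ 2 / t ^ 2 else |y| / t

theorem measurable_quadLin : Measurable (Function.uncurry quadLin) := by
  unfold quadLin Function.uncurry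
  refine Measurable.ite (measurableSet_le (by fun_prop) (by fun_prop)) ?_ ?_ <;> fun_prop

theorem quadLin_nonneg {t : ℝ} (ht : 0 < t) (y : ℝ) : 0 ≤ quadLin t y := by
  unfold quadLin
  split_ifs <;> positivity

theorem quadLin_le_abs_div {t : ℝ} (ht : 0 < t) (y : ℝ) : quadLin t y ≤ |y| / t := by
  unfold quadLin
  split_ifs with h
  · rw [← sq_abs, ← div_pow, sq]
    exact mul_le_of_le_one_right (by positivity) ((div_le_one ht).2 h)
  · exact le_rfl

theorem lintegral_quadLin_mul_rpow_le {p : ℝ} (hp1 : 1 < p) (hp2 : p < 2) (y : ℝ) :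
    ∫⁻ t in Set.Ioi 0, ENNReal.ofReal (quadLin t y) * ENNReal.ofReal (t ^ (p - 1))
      ≤ ENNReal.ofReal ((1 / (p - 1) + 1 / (2 - p)) * |y| ^ p) := by
  have h1 : 0 < p - 1 := by linarith
  have h2 : 0 < 2 - p := by linarith
  rcases eq_or_ne y 0 with rfl | hy
  · have : ∀ t : ℝ, quadLin t 0 = 0 := fun t => by simp [quadLin]
    simp [this]
  set a := |y| with ha
  have ha0 : 0 < a := abs_pos.2 hy
  have e1 : ∫⁻ t in Set.Ioc 0 a, ENNReal.ofReal (quadLin t y) * ENNReal.ofReal (t ^ (p - 1))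
      ≤ ENNReal.ofReal (1 / (p - 1) * a ^ p) := by
    have hint : IntervalIntegrable (fun t : ℝ => a * t ^ (p - 2)) volume 0 a :=
      (intervalIntegral.intervalIntegrable_rpow' (by linarith)).const_mul a
    have hval : ∫ t in Set.Ioc 0 a, a * t ^ (p - 2) = 1 / (p - 1) * a ^ p := by
      rw [← intervalIntegral.integral_of_le ha0.le, intervalIntegral.integral_const_mul,
        integral_rpow (Or.inl (by linarith)), show p - 2 + 1 = p - 1 by ring,
        Real.zero_rpow h1.ne', Real.rpow_sub_one ha0.ne']
      field_simp
      ring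
    rw [← hval, ofReal_integral_eq_lintegral_ofReal
      ((intervalIntegrable_iff_integrableOn_Ioc_of_le ha0.le).1 hint)
      ((ae_restrict_mem measurableSet_Ioc).mono fun t ht =>
        mul_nonneg ha0.le (Real.rpow_nonneg ht.1.le _))]
    refine setLIntegral_mono' measurableSet_Ioc fun t ht => ?_
    rw [← ENNReal.ofReal_mul (quadLin_nonneg ht.1 y)]
    refine ENNReal.ofReal_le_ofReal ?_
    calc quadLin t y * t ^ (p - 1) ≤ a / t * t ^ (p - 1) :=
          mul_le_mul_of_nonneg_right (quadLin_le_abs_div ht.1 y) (Real.rpow_nonneg ht.1.le _)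
      _ = a * t ^ (p - 2) := by
          have : t ^ (p - 2) = t ^ (p - 1) / t := by
            rw [show p - 2 = p - 1 - 1 by ring, Real.rpow_sub_one ht.1.ne']
          rw [this]
          ring
  have e2 : ∫⁻ t in Set.Ioi a, ENNReal.ofReal (quadLin t y) * ENNReal.ofReal (t ^ (p - 1))
      ≤ ENNReal.ofReal (1 / (2 - p) * a ^ p) := by
    have hint : IntegrableOn (fun t : ℝ => a ^ 2 * t ^ (p - 3)) (Set.Ioi a) :=
      (integrableOn_Ioi_rpow_of_lt (by linarith) ha0).const_mul (a ^ 2)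
    have hval : ∫ t in Set.Ioi a, a ^ 2 * t ^ (p - 3) = 1 / (2 - p) * a ^ p := by
      rw [integral_const_mul, integral_Ioi_rpow_of_lt (by linarith) ha0,
        show p - 3 + 1 = p - 2 by ring, neg_div, ← div_neg, neg_sub,
        Real.rpow_sub ha0, Real.rpow_two]
      field_simp
    rw [← hval, ofReal_integral_eq_lintegral_ofReal hint
      ((ae_restrict_mem measurableSet_Ioi).mono fun t ht =>
        mul_nonneg (sq_nonneg a) (Real.rpow_nonneg (ha0.trans ht).le _))]
    refine setLIntegral_mono' measurableSet_Ioi fun t ht => ?_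
    have ht0 : 0 < t := ha0.trans ht
    rw [← ENNReal.ofReal_mul (quadLin_nonneg ht0 y)]
    refine ENNReal.ofReal_le_ofReal (le_of_eq ?_)
    have : t ^ (p - 3) = t ^ (p - 1) / t ^ 2 := by
      rw [show p - 3 = p - 1 - 2 by ring, Real.rpow_sub ht0 (p - 1), Real.rpow_two]
    rw [quadLin, if_pos (le_of_lt ht), ha, sq_abs, this]
    ring
  rw [← Set.Ioc_union_Ioi_eq_Ioi ha0.le, add_mul,
    ENNReal.ofReal_add (by positivity) (by positivity)]
  exact (lintegral_union_le _ _ _).trans (add_le_add e1 e2)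

/-- Tail bound for the centered sums, obtained by truncating at level `t` and using the second
moment below `t` and the first moment above `t`. -/
theorem measureReal_lt_abs_sum_tailPart_le {Ω : Type*} [MeasurableSpace Ω] (μ : Measure Ω)
    [IsProbabilityMeasure μ] {X : ℕ → Ω → ℝ} (hX : ∀ n, Measurable (X n))
    {w : ℕ → ℝ} (hw : ∀ m, 0 < w m) (hw0 : 1 ≤ w 0) (hsum : Summable w)
    (hmix : ∀ m, 1 ≤ m → phiCoef μ X m ≤ w m ^ 2)
    (hXint : ∀ n, 1 ≤ n → Integrable (X n) μ) (n : ℕ) (b : ℝ) {t : ℝ} (ht : 0 < t) :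
    μ.real {ω | t < |∑ k ∈ Finset.Icc 1 n, tailPart μ X b k ω|}
      ≤ (16 * (∑' m, w m) + 4) * ∑ k ∈ Finset.Icc 1 n, ∫ ω, quadLin t (X k ω) ∂μ := by
  have hW : 0 ≤ ∑' m, w m := tsum_nonneg fun m => (hw m).le
  set f : ℝ → ℝ := fun x => if b < |x| ∧ |x| ≤ t then x else 0 with hfdef
  set h : ℝ → ℝ := fun x => if b < |x| ∧ t < |x| then x else 0 with hhdef
  have hf : Measurable f := Measurable.ite
    ((measurableSet_lt measurable_const measurable_norm).inter
      (measurableSet_le measurable_norm measurable_const)) measurable_id measurable_const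
  have hh : Measurable h := Measurable.ite
    ((measurableSet_lt measurable_const measurable_norm).inter
      (measurableSet_lt measurable_const measurable_norm)) measurable_id measurable_const
  have hfM : ∀ x, |f x| ≤ t := by
    intro x
    simp only [hfdef]
    split_ifs with hx
    · exact hx.2
    · simpa using ht.le
  have hhx : ∀ x, |h x| ≤ |x| := by
    intro x
    simp only [hhdef]
    split_ifs with hx
    · exact le_rfl
    · simp
  have hfh : ∀ x, (if b < |x| then x else 0) = f x + h x := by
    intro x
    simp only [hfdef, hhdef]
    by_cases h1 : b < |x| <;> by_cases h2 : |x| ≤ t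
    · simp [h1, h2, not_lt.2 h2]
    · simp [h1, h2, not_le.1 h2]
    · simp [h1]
    · simp [h1]
  have mf : ∀ k, Measurable fun ω => f (X k ω) := fun k => hf.comp (hX k)
  have mh : ∀ k, Measurable fun ω => h (X k ω) := fun k => hh.comp (hX k)
  have intf : ∀ k, Integrable (fun ω => f (X k ω)) μ := fun k =>
    Integrable.of_bound (mf k).aestronglyMeasurable t
      (Filter.Eventually.of_forall fun ω => hfM _)
  have inth : ∀ k, 1 ≤ k → Integrable (fun ω => h (X k ω)) μ := fun k hk =>
    (hXint k hk).mono (mh k).aestronglyMeasurable (Filter.Eventually.of_forall fun ω => hhx _)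
  have intq : ∀ k, 1 ≤ k → Integrable (fun ω => quadLin t (X k ω)) μ := fun k hk =>
    ((hXint k hk).abs.div_const t).mono'
      (measurable_quadLin.comp (measurable_const.prodMk (hX k))).aestronglyMeasurable
      (Filter.Eventually.of_forall fun ω => by
        rw [Real.norm_of_nonneg (quadLin_nonneg ht _)]
        exact quadLin_le_abs_div ht _)
  set S₁ : Ω → ℝ := fun ω => ∑ k ∈ Finset.Icc 1 n, (f (X k ω) - ∫ ω', f (X k ω') ∂μ) with hS₁
  set S₂ : Ω → ℝ := fun ω => ∑ k ∈ Finset.Icc 1 n, (h (X k ω) - ∫ ω', h (X k ω') ∂μ) with hS₂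
  have split : ∀ ω, ∑ k ∈ Finset.Icc 1 n, tailPart μ X b k ω = S₁ ω + S₂ ω := by
    intro ω
    simp only [hS₁, hS₂]
    rw [← Finset.sum_add_distrib]
    refine Finset.sum_congr rfl fun k hk => ?_
    unfold tailPart
    simp_rw [hfh]
    rw [integral_add (intf k) (inth k (Finset.mem_Icc.1 hk).1)]
    ring
  have mS₁ : Measurable S₁ := Finset.measurable_fun_sum _ fun k _ => (mf k).sub_const _
  have mS₂ : Measurable S₂ := Finset.measurable_fun_sum _ fun k _ => (mh k).sub_const _
  have intS₁ : Integrable (fun ω => S₁ ω ^ 2) μ := by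
    refine MemLp.integrable_sq (memLp_finsetSum _ fun k _ => ?_)
    exact (MemLp.of_bound (mf k).aestronglyMeasurable t
      (Filter.Eventually.of_forall fun ω => hfM _)).sub (memLp_const _)
  have intS₂ : Integrable (fun ω => |S₂ ω|) μ :=
    (integrable_finsetSum _ fun k hk =>
      (inth k (Finset.mem_Icc.1 hk).1).sub (integrable_const _)).abs
  have inth' : ∀ k ∈ Finset.Icc 1 n,
      Integrable (fun ω => |h (X k ω)| + ∫ ω', |h (X k ω')| ∂μ) μ := fun k hk =>
    (inth k (Finset.mem_Icc.1 hk).1).abs.add (integrable_const _)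
  have hE₂ : ∫ ω, |S₂ ω| ∂μ ≤ 2 * ∑ k ∈ Finset.Icc 1 n, ∫ ω, |h (X k ω)| ∂μ := by
    calc ∫ ω, |S₂ ω| ∂μ
        ≤ ∫ ω, ∑ k ∈ Finset.Icc 1 n, (|h (X k ω)| + ∫ ω', |h (X k ω')| ∂μ) ∂μ := by
          refine integral_mono intS₂ (integrable_finsetSum _ inth') fun ω => ?_
          refine (Finset.abs_sum_le_sum_abs _ _).trans (Finset.sum_le_sum fun k _ => ?_)
          exact (abs_sub _ _).trans (add_le_add le_rfl abs_integral_le_integral_abs)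
      _ = 2 * ∑ k ∈ Finset.Icc 1 n, ∫ ω, |h (X k ω)| ∂μ := by
          rw [integral_finsetSum _ inth', Finset.mul_sum]
          refine Finset.sum_congr rfl fun k hk => ?_
          rw [integral_add (inth k (Finset.mem_Icc.1 hk).1).abs (integrable_const _)]
          simp only [integral_const, probReal_univ, one_smul]
          ring
  have hE₁ := integral_sq_sum_centered_le μ hX hw hw0 hsum hmix hf hfM n
  have hq₁ : ∀ k, 1 ≤ k → ∫ ω, f (X k ω) ^ 2 ∂μ ≤ t ^ 2 * ∫ ω, quadLin t (X k ω) ∂μ := by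
    intro k hk
    rw [← integral_const_mul]
    refine integral_mono_of_nonneg (Filter.Eventually.of_forall fun ω => sq_nonneg _)
      ((intq k hk).const_mul _) (Filter.Eventually.of_forall fun ω => ?_)
    simp only [hfdef]
    split_ifs with hx
    · rw [quadLin, if_pos hx.2, mul_div_cancel₀ _ (by positivity)]
    · rw [zero_pow two_ne_zero]
      exact mul_nonneg (sq_nonneg t) (quadLin_nonneg ht _)
  have hq₂ : ∀ k, 1 ≤ k → ∫ ω, |h (X k ω)| ∂μ ≤ t * ∫ ω, quadLin t (X k ω) ∂μ := by
    intro k hk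
    rw [← integral_const_mul]
    refine integral_mono_of_nonneg (Filter.Eventually.of_forall fun ω => abs_nonneg _)
      ((intq k hk).const_mul _) (Filter.Eventually.of_forall fun ω => ?_)
    simp only [hhdef]
    split_ifs with hx
    · rw [quadLin, if_neg (not_le.2 hx.2), mul_div_cancel₀ _ ht.ne']
    · rw [abs_zero]
      exact mul_nonneg ht.le (quadLin_nonneg ht _)
  set Q := ∑ k ∈ Finset.Icc 1 n, ∫ ω, quadLin t (X k ω) ∂μ with hQ
  have b₁ : ∫ ω, S₁ ω ^ 2 ∂μ ≤ 4 * (∑' m, w m) * (t ^ 2 * Q) := by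
    refine hE₁.trans (mul_le_mul_of_nonneg_left ?_ (by positivity))
    rw [hQ, Finset.mul_sum]
    exact Finset.sum_le_sum fun k hk => hq₁ k (Finset.mem_Icc.1 hk).1
  have b₂ : ∫ ω, |S₂ ω| ∂μ ≤ 2 * (t * Q) := by
    refine hE₂.trans (mul_le_mul_of_nonneg_left ?_ (by positivity))
    rw [hQ, Finset.mul_sum]
    exact Finset.sum_le_sum fun k hk => hq₂ k (Finset.mem_Icc.1 hk).1
  simp_rw [split]
  have hms : MeasurableSet {ω | t < |S₁ ω + S₂ ω|} :=
    measurableSet_lt measurable_const (by fun_prop)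
  calc μ.real {ω | t < |S₁ ω + S₂ ω|}
      = ∫ ω, {ω | t < |S₁ ω + S₂ ω|}.indicator (fun _ => (1 : ℝ)) ω ∂μ := by
        rw [integral_indicator_const _ hms, smul_eq_mul, mul_one]
    _ ≤ ∫ ω, (4 / t ^ 2 * S₁ ω ^ 2 + 2 / t * |S₂ ω|) ∂μ := by
        refine integral_mono ((integrable_const _).indicator hms)
          ((intS₁.const_mul _).add (intS₂.const_mul _)) fun ω => ?_
        refine Set.indicator_apply_le' (fun hω => ?_) fun _ => by positivity
        have hω' : t < |S₁ ω| + |S₂ ω| := lt_of_lt_of_le hω (abs_add_le _ _)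
        rcases le_total (t / 2) |S₁ ω| with hc | hc
        · have : 1 ≤ 4 / t ^ 2 * S₁ ω ^ 2 := by
            rw [← sq_abs (S₁ ω), div_mul_eq_mul_div, le_div_iff₀ (by positivity)]
            nlinarith
          have : 0 ≤ 2 / t * |S₂ ω| := by positivity
          linarith
        · have : 1 ≤ 2 / t * |S₂ ω| := by
            rw [div_mul_eq_mul_div, le_div_iff₀ ht]
            linarith
          have : 0 ≤ 4 / t ^ 2 * S₁ ω ^ 2 := by positivity
          linarith
    _ = 4 / t ^ 2 * ∫ ω, S₁ ω ^ 2 ∂μ + 2 / t * ∫ ω, |S₂ ω| ∂μ := by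
        rw [integral_add (intS₁.const_mul _) (intS₂.const_mul _), integral_const_mul,
          integral_const_mul]
    _ ≤ 4 / t ^ 2 * (4 * (∑' m, w m) * (t ^ 2 * Q)) + 2 / t * (2 * (t * Q)) :=
        add_le_add (mul_le_mul_of_nonneg_left b₁ (by positivity))
          (mul_le_mul_of_nonneg_left b₂ (by positivity))
    _ = (16 * (∑' m, w m) + 4) * Q := by
        field_simp
        ring

/-- Layer cake: a tail bound by `quadLin` gives a bound for moments of order `p ∈ (1, 2)`. -/
theorem integral_abs_rpow_le_of_measureReal_lt_le {Ω : Type*} [MeasurableSpace Ω]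
    (μ : Measure Ω) [IsProbabilityMeasure μ] {p : ℝ} (hp1 : 1 < p) (hp2 : p < 2)
    {ι : Type*} (I : Finset ι) {Y : ι → Ω → ℝ} (hY : ∀ k ∈ I, Measurable (Y k))
    (hYp : ∀ k ∈ I, Integrable (fun ω => |Y k ω| ^ p) μ)
    (hYint : ∀ k ∈ I, Integrable (Y k) μ)
    {S : Ω → ℝ} (hS : Measurable S) {A : ℝ} (hA : 0 ≤ A)
    (htail : ∀ t, 0 < t →
      μ.real {ω | t < |S ω|} ≤ A * ∑ k ∈ I, ∫ ω, quadLin t (Y k ω) ∂μ) :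
    ∫ ω, |S ω| ^ p ∂μ
      ≤ p * (A * ((1 / (p - 1) + 1 / (2 - p)) * ∑ k ∈ I, ∫ ω, |Y k ω| ^ p ∂μ)) := by
  have h1 : 0 < p - 1 := by linarith
  have h2 : 0 < 2 - p := by linarith
  have hp0 : 0 < p := by linarith
  set c := 1 / (p - 1) + 1 / (2 - p) with hc
  have hc0 : 0 ≤ c := by positivity
  have hnn : ∀ k, 0 ≤ ∫ ω, |Y k ω| ^ p ∂μ := fun k =>
    integral_nonneg fun ω => Real.rpow_nonneg (abs_nonneg _) _
  rw [integral_eq_lintegral_of_nonneg_ae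
    (Filter.Eventually.of_forall fun ω => Real.rpow_nonneg (abs_nonneg _) _)
    (hS.abs.pow_const p).aestronglyMeasurable]
  refine ENNReal.toReal_le_of_le_ofReal
    (mul_nonneg hp0.le (mul_nonneg hA (mul_nonneg hc0 (Finset.sum_nonneg fun k _ => hnn k)))) ?_
  rw [lintegral_rpow_eq_lintegral_meas_lt_mul μ
    (Filter.Eventually.of_forall fun ω => abs_nonneg (S ω)) (by fun_prop) hp0,
    ENNReal.ofReal_mul hp0.le]
  refine mul_le_mul_right ?_ _
  have mq : ∀ k ∈ I, Measurable fun z : ℝ × Ω =>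
      ENNReal.ofReal (quadLin z.1 (Y k z.2)) * ENNReal.ofReal (z.1 ^ (p - 1)) := by
    intro k hk
    have : Measurable fun z : ℝ × Ω => quadLin z.1 (Y k z.2) :=
      measurable_quadLin.comp (measurable_fst.prodMk ((hY k hk).comp measurable_snd))
    fun_prop
  calc ∫⁻ t in Set.Ioi 0, μ {ω | t < |S ω|} * ENNReal.ofReal (t ^ (p - 1))
      ≤ ∫⁻ t in Set.Ioi 0, ENNReal.ofReal A * ∑ k ∈ I, ∫⁻ ω,
          ENNReal.ofReal (quadLin t (Y k ω)) * ENNReal.ofReal (t ^ (p - 1)) ∂μ := by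
        refine setLIntegral_mono' measurableSet_Ioi fun t ht => ?_
        have ht0 : 0 < t := ht
        have hk1 : ∀ k ∈ I, ∫⁻ ω, ENNReal.ofReal (quadLin t (Y k ω)) *
            ENNReal.ofReal (t ^ (p - 1)) ∂μ
            = ENNReal.ofReal (∫ ω, quadLin t (Y k ω) ∂μ) * ENNReal.ofReal (t ^ (p - 1)) := by
          intro k hk
          have hm : Measurable fun ω => quadLin t (Y k ω) :=
            measurable_quadLin.comp (measurable_const.prodMk (hY k hk))
          have hi : Integrable (fun ω => quadLin t (Y k ω)) μ :=
            ((hYint k hk).abs.div_const t).mono' hm.aestronglyMeasurable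
              (Filter.Eventually.of_forall fun ω => by
                rw [Real.norm_of_nonneg (quadLin_nonneg ht0 _)]
                exact quadLin_le_abs_div ht0 _)
          rw [lintegral_mul_const _ (by fun_prop), ofReal_integral_eq_lintegral_ofReal hi
            (Filter.Eventually.of_forall fun ω => quadLin_nonneg ht0 _)]
        rw [Finset.sum_congr rfl hk1, ← Finset.sum_mul, ← mul_assoc,
          ← ENNReal.ofReal_sum_of_nonneg
            (fun k _ => integral_nonneg fun ω => quadLin_nonneg ht0 _), ← ENNReal.ofReal_mul hA]
        refine mul_le_mul_left ?_ _
        rw [← ofReal_measureReal]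
        exact ENNReal.ofReal_le_ofReal (htail t ht0)
    _ = ENNReal.ofReal A * ∑ k ∈ I, ∫⁻ ω, (∫⁻ t in Set.Ioi 0,
          ENNReal.ofReal (quadLin t (Y k ω)) * ENNReal.ofReal (t ^ (p - 1))) ∂μ := by
        rw [lintegral_const_mul' _ _ ENNReal.ofReal_ne_top, lintegral_finsetSum' _
          fun k hk => (Measurable.lintegral_prod_right' (mq k hk)).aemeasurable]
        congr 1
        exact Finset.sum_congr rfl fun k hk => lintegral_lintegral_swap (mq k hk).aemeasurable
    _ ≤ ENNReal.ofReal A * ∑ k ∈ I, ∫⁻ ω, ENNReal.ofReal (c * |Y k ω| ^ p) ∂μ := by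
        refine mul_le_mul_right (Finset.sum_le_sum fun k _ => lintegral_mono fun ω => ?_) _
        exact lintegral_quadLin_mul_rpow_le hp1 hp2 _
    _ = ENNReal.ofReal (A * (c * ∑ k ∈ I, ∫ ω, |Y k ω| ^ p ∂μ)) := by
        rw [ENNReal.ofReal_mul hA, Finset.mul_sum I _ c,
          ENNReal.ofReal_sum_of_nonneg fun k _ => mul_nonneg hc0 (hnn k)]
        congr 1
        refine Finset.sum_congr rfl fun k hk => ?_
        rw [← integral_const_mul, ofReal_integral_eq_lintegral_ofReal ((hYp k hk).const_mul c)
          (Filter.Eventually.of_forall fun ω =>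
            mul_nonneg hc0 (Real.rpow_nonneg (abs_nonneg _) _))]

/-- Lemma 1 of the paper: under the φ-mixing condition (1) with rate `r > 2`
and the moment condition (2) with exponent `α ∈ (0,1)`, there is a constant `cα > 0`,
independent of `n` and `b`, such that `E|∑_{k=1}^n Z_k(b)|^{1+α} ≤ 2^{1+α} cα να n`
for all `n ≥ 1` and `b > 0`. -/
theorem sample_mean_tail_moment_bound
    {Ω : Type*} [MeasurableSpace Ω] (μ : Measure Ω) [IsProbabilityMeasure μ]
    (X : ℕ → Ω → ℝ) (hmeas : ∀ n, Measurable (X n))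
    (r C : ℝ) (hr : 2 < r) (hC : 0 < C)
    (hmix : ∀ m : ℕ, 1 ≤ m → phiCoef μ X m ≤ C * ((m : ℝ) + 1) ^ (-r))
    (α να : ℝ) (hα0 : 0 < α) (hα1 : α < 1)
    (hint : ∀ n : ℕ, 1 ≤ n → Integrable (fun ω => |X n ω| ^ (1 + α)) μ)
    (hbdd : BddAbove (Set.range fun n : ℕ => ∫ ω, |X (n + 1) ω| ^ (1 + α) ∂μ))
    (hνα : να = ⨆ n : ℕ, ∫ ω, |X (n + 1) ω| ^ (1 + α) ∂μ)
    (hνpos : 0 < να) :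
    ∃ cα : ℝ, 0 < cα ∧ ∀ n : ℕ, 1 ≤ n → ∀ b : ℝ, 0 < b →
      ∫ ω, |∑ k ∈ Finset.Icc 1 n, tailPart μ X b k ω| ^ (1 + α) ∂μ ≤
        2 ^ (1 + α) * cα * να * n := by
  have hp1 : 1 < 1 + α := by linarith
  have hp2 : 1 + α < 2 := by linarith
  have hr2 : 1 < r / 2 := by linarith
  set w : ℕ → ℝ := fun m => (1 + √C) * ((m : ℝ) + 1) ^ (-(r / 2)) with hwdef
  have hbase : ∀ m : ℕ, 0 < (m : ℝ) + 1 := fun m => by positivity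
  have hw : ∀ m, 0 < w m := fun m => by
    have := Real.rpow_pos_of_pos (hbase m) (-(r / 2))
    positivity
  have hw0 : 1 ≤ w 0 := by simp [hwdef]
  have hsum : Summable w := by
    refine Summable.mul_left _ (((Real.summable_one_div_nat_add_rpow 1 (r / 2)).2 hr2).congr
      fun m => ?_)
    rw [abs_of_pos (hbase m), Real.rpow_neg (hbase m).le, one_div]
  have hmix' : ∀ m, 1 ≤ m → phiCoef μ X m ≤ w m ^ 2 := by
    intro m hm
    refine (hmix m hm).trans ?_
    have hrp : (((m : ℝ) + 1) ^ (-(r / 2))) ^ 2 = ((m : ℝ) + 1) ^ (-r) := by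
      rw [← Real.rpow_natCast, ← Real.rpow_mul (hbase m).le]
      congr 1
      push_cast
      ring
    rw [hwdef, mul_pow, hrp]
    refine mul_le_mul_of_nonneg_right ?_ (Real.rpow_nonneg (hbase m).le _)
    nlinarith [Real.sq_sqrt hC.le, Real.sqrt_nonneg C]
  have hXint : ∀ n, 1 ≤ n → Integrable (X n) μ := by
    intro n hn
    refine ((integrable_const (1 : ℝ)).add (hint n hn)).mono' (hmeas n).aestronglyMeasurable
      (Filter.Eventually.of_forall fun ω => ?_)
    simp only [Pi.add_apply, Real.norm_eq_abs]
    rcases le_total |X n ω| 1 with h | h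
    · exact h.trans (le_add_of_nonneg_right (Real.rpow_nonneg (abs_nonneg _) _))
    · have := Real.rpow_le_rpow_of_exponent_le h hp1.le
      rw [Real.rpow_one] at this
      linarith
  have hν : ∀ k, 1 ≤ k → ∫ ω, |X k ω| ^ (1 + α) ∂μ ≤ να := by
    intro k hk
    obtain ⟨m, rfl⟩ := Nat.exists_eq_add_of_le' hk
    rw [hνα]
    exact le_ciSup hbdd m
  have hW : 0 ≤ ∑' m, w m := tsum_nonneg fun m => (hw m).le
  have hα2 : 0 < 2 - (1 + α) := by linarith
  have hα3 : 0 < 1 + α - 1 := by linarith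
  set A := 16 * (∑' m, w m) + 4 with hA
  have hA0 : 0 < A := by positivity
  set c := 1 / (1 + α - 1) + 1 / (2 - (1 + α)) with hc
  have hc0 : 0 < c := by positivity
  refine ⟨(1 + α) * (A * c), by positivity, fun n _ b _ => ?_⟩
  have hSm : Measurable fun ω => ∑ k ∈ Finset.Icc 1 n, tailPart μ X b k ω := by
    refine Finset.measurable_fun_sum _ fun k _ => Measurable.sub_const ?_ _
    exact Measurable.ite (measurableSet_lt measurable_const (hmeas k).abs) (hmeas k)
      measurable_const
  have main := integral_abs_rpow_le_of_measureReal_lt_le μ hp1 hp2 (Finset.Icc 1 n)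
    (fun k _ => hmeas k) (fun k hk => hint k (Finset.mem_Icc.1 hk).1)
    (fun k hk => hXint k (Finset.mem_Icc.1 hk).1) hSm hA0.le
    fun t ht => measureReal_lt_abs_sum_tailPart_le μ hmeas hw hw0 hsum hmix' hXint n b ht
  have hsumν : ∑ k ∈ Finset.Icc 1 n, ∫ ω, |X k ω| ^ (1 + α) ∂μ ≤ n * να := by
    simpa using Finset.sum_le_card_nsmul (Finset.Icc 1 n) _ να
      fun k hk => hν k (Finset.mem_Icc.1 hk).1
  have h2 : (1 : ℝ) ≤ 2 ^ (1 + α) := Real.one_le_rpow one_le_two (by linarith)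
  calc _ ≤ _ := main
    _ ≤ (1 + α) * (A * (c * (n * να))) := by gcongr
    _ = 1 * ((1 + α) * (A * c) * να * n) := by ring
    _ ≤ 2 ^ (1 + α) * ((1 + α) * (A * c) * να * n) :=
        mul_le_mul_of_nonneg_right h2 (by positivity)
    _ = _ := by ring
end

section
/- Let {X_n, n≥1} satisfy the φ-mixing condition (1) with rate r>2 and constant C>0, and the moment condition (2) with exponent α ∈ (0,1). Let b>0, Z_k = Z_k(b) = X_k·1(|X_k|>b) − E(X_k·1(|X_k|>b)), s = 1+α, M_n = Σ_{k=1}^n E|Z_k|^s, and φ = Σ_{m=1}^∞ φ(m)^{1/2}. Then for every ε > 0, E|Σ_{k=1}^n Z_k|^{1+α} ≤ f(ε)·M_n, where f(ε) = 2 + ε + (1+4φ)·[1−(1+ε)^{-1}]^{-2}·4/(1−α)^2. -/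
open MeasureTheory ProbabilityTheory Finset

/-- Quantitative one-sided dependence of two real random variables: conditioning on an event of
`f` changes the probability of an event of `g` by at most `p`. -/
def PhiDependent {Ω : Type*} [MeasurableSpace Ω] (μ : Measure Ω) (p : ℝ) (f g : Ω → ℝ) : Prop :=
  ∀ U V : Set ℝ, MeasurableSet U → MeasurableSet V →
    |μ.real (f ⁻¹' U ∩ g ⁻¹' V) - μ.real (f ⁻¹' U) * μ.real (g ⁻¹' V)| ≤ p * μ.real (f ⁻¹' U)

section Covariance

variable {Ω : Type*} [MeasurableSpace Ω] {μ : Measure Ω}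

theorem PhiDependent.comp {p : ℝ} {f g : Ω → ℝ} (h : PhiDependent μ p f g) {u v : ℝ → ℝ}
    (hu : Measurable u) (hv : Measurable v) :
    PhiDependent μ p (fun ω => u (f ω)) (fun ω => v (g ω)) :=
  fun _ _ hU hV => h _ _ (hu hU) (hv hV)

variable [IsProbabilityMeasure μ]

theorem integral_comp_eq_sum_of_mem_finset {β : Type*} {h : Ω → β} {S : Finset β}
    (hS : ∀ ω, h ω ∈ S) (hm : ∀ a, MeasurableSet (h ⁻¹' {a})) (F : β → ℝ) :
    ∫ ω, F (h ω) ∂μ = ∑ a ∈ S, F a * μ.real (h ⁻¹' {a}) := by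
  classical
  have hpt : ∀ ω, F (h ω) = ∑ a ∈ S, F a * (h ⁻¹' {a}).indicator (1 : Ω → ℝ) ω := by
    intro ω
    rw [Finset.sum_eq_single (h ω)]
    · simp
    · intro a _ ha
      simp [Set.indicator, Ne.symm ha]
    · intro hn
      exact absurd (hS ω) hn
  simp_rw [hpt]
  rw [integral_finsetSum]
  · refine Finset.sum_congr rfl fun a _ => ?_
    rw [integral_const_mul, integral_indicator_one (hm a)]
  · intro a _
    exact ((integrable_const (1 : ℝ)).indicator (hm a)).const_mul _

theorem measureReal_inter_preimage_finset {g : Ω → ℝ} (hg : Measurable g) {A : Set Ω}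
    (hA : MeasurableSet A) (T : Finset ℝ) :
    ∑ b ∈ T, μ.real (A ∩ g ⁻¹' {b}) = μ.real (A ∩ g ⁻¹' (T : Set ℝ)) := by
  rw [← measureReal_biUnion_finset]
  · congr 1
    ext ω
    simp
  · intro b _ c _ hbc
    refine Set.disjoint_left.2 ?_
    rintro ω ⟨_, h1⟩ ⟨_, h2⟩
    exact hbc (h1.symm.trans h2)
  · intro b _
    exact hA.inter (hg (measurableSet_singleton b))

theorem PhiDependent.sum_abs_le {p : ℝ} {f g : Ω → ℝ} (h : PhiDependent μ p f g)
    (hf : Measurable f) (hg : Measurable g) (T : Finset ℝ) (a : ℝ) :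
    ∑ b ∈ T, |μ.real (f ⁻¹' {a} ∩ g ⁻¹' {b}) - μ.real (f ⁻¹' {a}) * μ.real (g ⁻¹' {b})|
      ≤ 2 * p * μ.real (f ⁻¹' {a}) := by
  classical
  have hsum : ∀ T' : Finset ℝ,
      |∑ b ∈ T', (μ.real (f ⁻¹' {a} ∩ g ⁻¹' {b}) - μ.real (f ⁻¹' {a}) * μ.real (g ⁻¹' {b}))|
        ≤ p * μ.real (f ⁻¹' {a}) := by
    intro T'
    have h1 := measureReal_inter_preimage_finset (μ := μ) hg
      (hf (measurableSet_singleton a)) T'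
    have h2 := measureReal_inter_preimage_finset (μ := μ) hg MeasurableSet.univ T'
    simp only [Set.univ_inter] at h2
    rw [Finset.sum_sub_distrib, ← Finset.mul_sum, h1, h2]
    exact h _ _ (measurableSet_singleton a) T'.measurableSet
  set D : ℝ → ℝ := fun b =>
    μ.real (f ⁻¹' {a} ∩ g ⁻¹' {b}) - μ.real (f ⁻¹' {a}) * μ.real (g ⁻¹' {b}) with hD
  rw [← Finset.sum_filter_add_sum_filter_not T (fun b => 0 ≤ D b)]
  have e1 : ∑ b ∈ T with 0 ≤ D b, |D b| = ∑ b ∈ T with 0 ≤ D b, D b :=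
    Finset.sum_congr rfl fun b hb => abs_of_nonneg (Finset.mem_filter.1 hb).2
  have e2 : ∑ b ∈ T with ¬ 0 ≤ D b, |D b| = -∑ b ∈ T with ¬ 0 ≤ D b, D b := by
    rw [← Finset.sum_neg_distrib]
    exact Finset.sum_congr rfl fun b hb =>
      abs_of_neg (not_le.1 (Finset.mem_filter.1 hb).2)
  have b1 := (abs_le.1 (hsum (T.filter fun b => 0 ≤ D b))).2
  have b2 := (abs_le.1 (hsum (T.filter fun b => ¬ 0 ≤ D b))).1
  rw [e1, e2]
  linarith

theorem sum_abs_joint_sub_prod_le {f g : Ω → ℝ} (hf : Measurable f) (hg : Measurable g)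
    (S : Finset ℝ) (b : ℝ) :
    ∑ a ∈ S, |μ.real (f ⁻¹' {a} ∩ g ⁻¹' {b}) - μ.real (f ⁻¹' {a}) * μ.real (g ⁻¹' {b})|
      ≤ 2 * μ.real (g ⁻¹' {b}) := by
  have h1 := measureReal_inter_preimage_finset (μ := μ) hf (hg (measurableSet_singleton b)) S
  have h2 := measureReal_inter_preimage_finset (μ := μ) hf MeasurableSet.univ S
  simp only [Set.univ_inter] at h2
  calc _ ≤ ∑ a ∈ S, (μ.real (g ⁻¹' {b} ∩ f ⁻¹' {a}) + μ.real (f ⁻¹' {a}) * μ.real (g ⁻¹' {b})) := by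
        refine Finset.sum_le_sum fun a _ => ?_
        rw [Set.inter_comm]
        refine (abs_sub _ _).trans_eq ?_
        rw [abs_of_nonneg measureReal_nonneg,
          abs_of_nonneg (mul_nonneg measureReal_nonneg measureReal_nonneg)]
    _ = μ.real (g ⁻¹' {b} ∩ f ⁻¹' S) + μ.real (f ⁻¹' S) * μ.real (g ⁻¹' {b}) := by
        rw [Finset.sum_add_distrib, ← Finset.sum_mul, h1, h2]
    _ ≤ μ.real (g ⁻¹' {b}) + 1 * μ.real (g ⁻¹' {b}) := by
        exact add_le_add (measureReal_mono Set.inter_subset_left)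
          (mul_le_mul_of_nonneg_right measureReal_le_one measureReal_nonneg)
    _ = _ := by ring

theorem PhiDependent.abs_integral_mul_sub_le_of_finite {p : ℝ} (hp : 0 ≤ p) {f g : Ω → ℝ}
    (h : PhiDependent μ p f g) (hf : Measurable f) (hg : Measurable g) {S T : Finset ℝ}
    (hS : ∀ ω, f ω ∈ S) (hT : ∀ ω, g ω ∈ T) :
    |∫ ω, f ω * g ω ∂μ - (∫ ω, f ω ∂μ) * ∫ ω, g ω ∂μ|
      ≤ √p * (∫ ω, f ω ^ 2 ∂μ + ∫ ω, g ω ^ 2 ∂μ) := by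
  have hfm : ∀ a, MeasurableSet (f ⁻¹' {a}) := fun a => hf (measurableSet_singleton a)
  have hgm : ∀ a, MeasurableSet (g ⁻¹' {a}) := fun a => hg (measurableSet_singleton a)
  have hpre : ∀ a b : ℝ, (fun ω => (f ω, g ω)) ⁻¹' {(a, b)} = f ⁻¹' {a} ∩ g ⁻¹' {b} := by
    intro a b
    ext ω
    simp
  have hfg : ∫ ω, f ω * g ω ∂μ
      = ∑ a ∈ S, ∑ b ∈ T, a * b * μ.real (f ⁻¹' {a} ∩ g ⁻¹' {b}) := by
    have := integral_comp_eq_sum_of_mem_finset (μ := μ) (h := fun ω => (f ω, g ω)) (S := S ×ˢ T)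
      (fun ω => Finset.mem_product.2 ⟨hS ω, hT ω⟩)
      (fun q => by rw [hpre q.1 q.2]; exact (hfm _).inter (hgm _)) (fun q => q.1 * q.2)
    rw [this, Finset.sum_product]
    simp_rw [hpre]
  have hf1 := integral_comp_eq_sum_of_mem_finset (μ := μ) hS hfm (fun a => a)
  have hg1 := integral_comp_eq_sum_of_mem_finset (μ := μ) hT hgm (fun a => a)
  have hf2 := integral_comp_eq_sum_of_mem_finset (μ := μ) hS hfm (fun a => a ^ 2)
  have hg2 := integral_comp_eq_sum_of_mem_finset (μ := μ) hT hgm (fun a => a ^ 2)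
  set D : ℝ → ℝ → ℝ := fun a b =>
    μ.real (f ⁻¹' {a} ∩ g ⁻¹' {b}) - μ.real (f ⁻¹' {a}) * μ.real (g ⁻¹' {b}) with hD
  have hterm : ∀ a b, |a * b * D a b| ≤ a ^ 2 / (2 * √p) * |D a b| + b ^ 2 * √p / 2 * |D a b| := by
    intro a b
    rcases hp.eq_or_lt with rfl | hp'
    · have := h {a} {b} (measurableSet_singleton a) (measurableSet_singleton b)
      have h0 : D a b = 0 := by
        rw [zero_mul] at this
        exact abs_nonpos_iff.1 this
      simp [h0]
    · have hq : 0 < √p := Real.sqrt_pos.2 hp'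
      rw [abs_mul, abs_mul, ← add_mul]
      refine mul_le_mul_of_nonneg_right ?_ (abs_nonneg _)
      rw [div_add' _ _ _ (by positivity), le_div_iff₀ (by positivity)]
      have := sq_nonneg (|a| - |b| * √p)
      rw [← sq_abs a, ← sq_abs b]
      linarith
  have hdiff : ∫ ω, f ω * g ω ∂μ - (∫ ω, f ω ∂μ) * ∫ ω, g ω ∂μ
      = ∑ a ∈ S, ∑ b ∈ T, a * b * D a b := by
    rw [hfg, hf1, hg1, Finset.sum_mul_sum, ← Finset.sum_sub_distrib]
    refine Finset.sum_congr rfl fun a _ => ?_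
    rw [← Finset.sum_sub_distrib]
    refine Finset.sum_congr rfl fun b _ => ?_
    simp only [hD]
    ring
  rw [hdiff, hf2, hg2]
  calc |∑ a ∈ S, ∑ b ∈ T, a * b * D a b|
      ≤ ∑ a ∈ S, ∑ b ∈ T, |a * b * D a b| :=
        (Finset.abs_sum_le_sum_abs _ _).trans
          (Finset.sum_le_sum fun a _ => Finset.abs_sum_le_sum_abs _ _)
    _ ≤ ∑ a ∈ S, ∑ b ∈ T, (a ^ 2 / (2 * √p) * |D a b| + b ^ 2 * √p / 2 * |D a b|) :=
        Finset.sum_le_sum fun a _ => Finset.sum_le_sum fun b _ => hterm a b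
    _ = ∑ a ∈ S, a ^ 2 / (2 * √p) * ∑ b ∈ T, |D a b|
        + ∑ b ∈ T, b ^ 2 * √p / 2 * ∑ a ∈ S, |D a b| := by
        simp_rw [Finset.sum_add_distrib, Finset.mul_sum]
        congr 1
        exact Finset.sum_comm
    _ ≤ ∑ a ∈ S, a ^ 2 / (2 * √p) * (2 * p * μ.real (f ⁻¹' {a}))
        + ∑ b ∈ T, b ^ 2 * √p / 2 * (2 * μ.real (g ⁻¹' {b})) := by
        gcongr with a _ b _
        · exact h.sum_abs_le hf hg T a
        · exact sum_abs_joint_sub_prod_le hf hg S b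
    _ = _ := by
        have hpp : p / √p = √p := Real.div_sqrt
        rw [mul_add, Finset.mul_sum, Finset.mul_sum]
        congr 1
        · refine Finset.sum_congr rfl fun a _ => ?_
          calc _ = a ^ 2 * (p / √p) * μ.real (f ⁻¹' {a}) := by ring
            _ = _ := by rw [hpp]; ring
        · refine Finset.sum_congr rfl fun a _ => ?_
          ring

/-- Covariance inequality for bounded `φ`-dependent random variables. -/
theorem PhiDependent.abs_covariance_le {p : ℝ} (hp : 0 ≤ p) {f g : Ω → ℝ}
    (h : PhiDependent μ p f g) (hf : Measurable f) (hg : Measurable g) {c : ℝ}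
    (hfc : ∀ ω, |f ω| ≤ c) (hgc : ∀ ω, |g ω| ≤ c) :
    |cov[f, g; μ]| ≤ √p * (∫ ω, f ω ^ 2 ∂μ + ∫ ω, g ω ^ 2 ∂μ) := by
  have hfL : MemLp f 2 μ :=
    MemLp.of_bound hf.aestronglyMeasurable c (Filter.Eventually.of_forall hfc)
  have hgL : MemLp g 2 μ :=
    MemLp.of_bound hg.aestronglyMeasurable c (Filter.Eventually.of_forall hgc)
  rw [covariance_eq_sub hfL hgL]
  have hc : 0 ≤ c := by
    obtain ⟨ω⟩ := nonempty_of_isProbabilityMeasure μ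
    exact (abs_nonneg _).trans (hfc ω)
  have hid : StronglyMeasurable (id : ℝ → ℝ) := stronglyMeasurable_id
  set u : ℕ → ℝ → ℝ := fun n => hid.approxBounded c n with hu
  have hum : ∀ n, Measurable (u n) := fun n => (hid.approxBounded c n).measurable
  have huc : ∀ n x, |u n x| ≤ c := fun n x => hid.norm_approxBounded_le hc n x
  have hut : ∀ x, |x| ≤ c → Filter.Tendsto (fun n => u n x) Filter.atTop (nhds x) :=
    fun x hx => hid.tendsto_approxBounded_of_norm_le (x := x) hx
  have hlim : ∀ F : ℝ → ℝ → ℝ, Continuous (Function.uncurry F) →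
      (∃ K, ∀ x y, |x| ≤ c → |y| ≤ c → |F x y| ≤ K) →
      Filter.Tendsto (fun n => ∫ ω, F (u n (f ω)) (u n (g ω)) ∂μ) Filter.atTop
        (nhds (∫ ω, F (f ω) (g ω) ∂μ)) := by
    rintro F hF ⟨K, hK⟩
    refine tendsto_integral_of_dominated_convergence (fun _ => K) ?_ (integrable_const K) ?_ ?_
    · intro n
      exact (hF.measurable.comp
        (((hum n).comp hf).prodMk ((hum n).comp hg))).aestronglyMeasurable
    · intro n
      exact Filter.Eventually.of_forall fun ω => hK _ _ (huc _ _) (huc _ _)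
    · refine Filter.Eventually.of_forall fun ω => ?_
      exact (hF.tendsto (f ω, g ω)).comp
        ((hut _ (hfc ω)).prodMk_nhds (hut _ (hgc ω)))
  have l1 := hlim (fun x y => x * y) (by unfold Function.uncurry; fun_prop)
    ⟨c * c, fun x y hx hy => by rw [abs_mul]; gcongr⟩
  have l2 := hlim (fun x _ => x) (by unfold Function.uncurry; fun_prop)
    ⟨c, fun x y hx hy => hx⟩
  have l3 := hlim (fun _ y => y) (by unfold Function.uncurry; fun_prop)
    ⟨c, fun x y hx hy => hy⟩
  have l4 := hlim (fun x _ => x ^ 2) (by unfold Function.uncurry; fun_prop)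
    ⟨c ^ 2, fun x y hx hy => by rw [abs_pow]; gcongr⟩
  have l5 := hlim (fun _ y => y ^ 2) (by unfold Function.uncurry; fun_prop)
    ⟨c ^ 2, fun x y hx hy => by rw [abs_pow]; gcongr⟩
  refine le_of_tendsto_of_tendsto' (l1.sub (l2.mul l3)).abs ((l4.add l5).const_mul (√p)) ?_
  intro n
  exact (h.comp (hum n) (hum n)).abs_integral_mul_sub_le_of_finite hp ((hum n).comp hf)
    ((hum n).comp hg) (S := (hid.approxBounded c n).range) (T := (hid.approxBounded c n).range)
    (fun ω => SimpleFunc.mem_range_self _ _) (fun ω => SimpleFunc.mem_range_self _ _)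

end Covariance

section MixingCoefficient

variable {Ω : Type*} [MeasurableSpace Ω] (μ : Measure Ω) (X : ℕ → Ω → ℝ)

theorem phiCoef_nonneg (m : ℕ) : 0 ≤ phiCoef μ X m := by
  refine Real.sSup_nonneg ?_
  rintro x ⟨k, -, A, B, -, -, -, rfl⟩
  exact abs_nonneg _

theorem summable_sqrt_phiCoef {r C : ℝ} (hr : 2 < r)
    (hmix : ∀ m : ℕ, 1 ≤ m → phiCoef μ X m ≤ C * ((m : ℝ) + 1) ^ (-r)) :
    Summable fun m : ℕ => √(phiCoef μ X (m + 1)) := by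
  have hs : Summable fun m : ℕ => √C * (1 / ((m + 2 : ℕ) : ℝ) ^ (r / 2)) :=
    ((summable_nat_add_iff 2).2
      (Real.summable_one_div_nat_rpow.2 (by linarith : 1 < r / 2))).mul_left _
  refine Summable.of_nonneg_of_le (fun _ => Real.sqrt_nonneg _) (fun m => ?_) hs
  have hm : (0 : ℝ) ≤ ((m + 2 : ℕ) : ℝ) := Nat.cast_nonneg _
  calc √(phiCoef μ X (m + 1)) ≤ √(C * ((m + 2 : ℕ) : ℝ) ^ (-r)) := by
        refine Real.sqrt_le_sqrt ((hmix (m + 1) (by omega)).trans_eq ?_)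
        push_cast
        ring_nf
    _ = √C * (1 / ((m + 2 : ℕ) : ℝ) ^ (r / 2)) := by
        rw [Real.sqrt_mul' _ (Real.rpow_nonneg hm _), Real.sqrt_eq_rpow (_ ^ _),
          ← Real.rpow_mul hm, one_div, one_div, ← Real.rpow_neg hm]
        ring_nf

variable [IsProbabilityMeasure μ]

theorem bddAbove_phiCoef_set (m : ℕ) :
    BddAbove {x : ℝ | ∃ k : ℕ, 1 ≤ k ∧ ∃ A B : Set Ω,
      MeasurableSet[⨆ i ∈ Set.Icc 1 k, MeasurableSpace.comap (X i) inferInstance] A ∧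
      MeasurableSet[⨆ i ∈ Set.Ici (k + m), MeasurableSpace.comap (X i) inferInstance] B ∧
      0 < μ A ∧
      x = |(μ (B ∩ A)).toReal / (μ A).toReal - (μ B).toReal|} := by
  refine ⟨1, ?_⟩
  rintro x ⟨k, -, A, B, -, -, -, rfl⟩
  have h1 : (μ (B ∩ A)).toReal / (μ A).toReal ≤ 1 :=
    div_le_one_of_le₀ (measureReal_mono (μ := μ) Set.inter_subset_right) ENNReal.toReal_nonneg
  have h2 : 0 ≤ (μ (B ∩ A)).toReal / (μ A).toReal := by positivity
  have h3 : (μ B).toReal ≤ 1 := measureReal_le_one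
  have h4 : 0 ≤ (μ B).toReal := ENNReal.toReal_nonneg
  rw [abs_le]
  constructor <;> linarith

theorem phiDependent_phiCoef {i j : ℕ} (hi : 1 ≤ i) (hij : i < j) :
    PhiDependent μ (phiCoef μ X (j - i)) (X i) (X j) := by
  intro U V hU hV
  rcases eq_or_ne (μ (X i ⁻¹' U)) 0 with h0 | h0
  · have h1 : μ (X i ⁻¹' U ∩ X j ⁻¹' V) = 0 := measure_mono_null Set.inter_subset_left h0
    simp [Measure.real, h0, h1]
  have hpos : 0 < μ.real (X i ⁻¹' U) := ENNReal.toReal_pos h0 (measure_ne_top _ _)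
  have hle : |μ.real (X j ⁻¹' V ∩ X i ⁻¹' U) / μ.real (X i ⁻¹' U) - μ.real (X j ⁻¹' V)|
      ≤ phiCoef μ X (j - i) := by
    refine le_csSup (bddAbove_phiCoef_set μ X (j - i))
      ⟨i, hi, X i ⁻¹' U, X j ⁻¹' V, ?_, ?_, pos_iff_ne_zero.2 h0, rfl⟩
    · exact (le_iSup₂_of_le (f := fun i _ => MeasurableSpace.comap (X i) inferInstance)
        i ⟨hi, le_rfl⟩ le_rfl) _ ⟨U, hU, rfl⟩
    · exact (le_iSup₂_of_le (f := fun i _ => MeasurableSpace.comap (X i) inferInstance)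
        j (Set.mem_Ici.2 (by omega)) le_rfl) _ ⟨V, hV, rfl⟩
  calc |μ.real (X i ⁻¹' U ∩ X j ⁻¹' V) - μ.real (X i ⁻¹' U) * μ.real (X j ⁻¹' V)|
      = |μ.real (X j ⁻¹' V ∩ X i ⁻¹' U) / μ.real (X i ⁻¹' U) - μ.real (X j ⁻¹' V)|
          * μ.real (X i ⁻¹' U) := by
        rw [← abs_of_pos hpos, ← abs_mul, abs_of_pos hpos, sub_mul,
          div_mul_cancel₀ _ hpos.ne', Set.inter_comm, mul_comm (μ.real (X j ⁻¹' V))]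
    _ ≤ _ := by gcongr

end MixingCoefficient

section Variance

variable {Ω : Type*} [MeasurableSpace Ω] {μ : Measure Ω} [IsProbabilityMeasure μ]

theorem sum_comp_dist_le {c : ℕ → ℝ} (hc : ∀ m, 0 ≤ c m)
    (hs : Summable fun m => c (m + 1)) (n i : ℕ) :
    ∑ j ∈ Finset.Icc 1 n with j ≠ i, c (Nat.dist i j) ≤ 2 * ∑' m, c (m + 1) := by
  have hinj : ∀ S : Finset ℕ, (∀ j ∈ S, Nat.dist i j ≠ 0) →
      (Set.InjOn (Nat.dist i) (S : Set ℕ)) →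
      ∑ j ∈ S, c (Nat.dist i j) ≤ ∑' m, c (m + 1) := by
    intro S h0 hS
    have hS' : Set.InjOn (fun j => Nat.dist i j - 1) (S : Set ℕ) := by
      intro a ha b hb hab
      have := h0 a ha
      have := h0 b hb
      exact hS ha hb (by simp only at hab; omega)
    calc ∑ j ∈ S, c (Nat.dist i j) = ∑ j ∈ S, c ((Nat.dist i j - 1) + 1) := by
          refine Finset.sum_congr rfl fun j hj => ?_
          rw [Nat.sub_add_cancel (Nat.pos_of_ne_zero (h0 j hj))]
      _ = ∑ m ∈ S.image (fun j => Nat.dist i j - 1), c (m + 1) :=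
          (Finset.sum_image (f := fun m => c (m + 1)) hS').symm
      _ ≤ _ := hs.sum_le_tsum _ fun m _ => hc _
  rw [← Finset.sum_filter_add_sum_filter_not _ (fun j => j < i), two_mul]
  refine add_le_add (hinj _ ?_ ?_) (hinj _ ?_ ?_)
  all_goals
    intro j hj
    try intro k hk hjk
    simp only [Finset.coe_filter, Finset.mem_filter, Set.mem_ofPred_eq, Nat.dist] at *
    omega

/-- Variance of a sum whose pairwise covariances are dominated by second moments with
summable weights. -/
theorem variance_sum_le_of_covariance_le {Y : ℕ → Ω → ℝ} {c : ℕ → ℝ} (hc : ∀ m, 0 ≤ c m)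
    (hs : Summable fun m => c (m + 1)) (n : ℕ)
    (hY : ∀ i ∈ Finset.Icc 1 n, MemLp (Y i) 2 μ)
    (hcov : ∀ i ∈ Finset.Icc 1 n, ∀ j ∈ Finset.Icc 1 n, i < j →
      |cov[Y i, Y j; μ]| ≤ c (j - i) * (∫ ω, Y i ω ^ 2 ∂μ + ∫ ω, Y j ω ^ 2 ∂μ)) :
    Var[fun ω => ∑ i ∈ Finset.Icc 1 n, Y i ω; μ]
      ≤ (1 + 4 * ∑' m, c (m + 1)) * ∑ i ∈ Finset.Icc 1 n, ∫ ω, Y i ω ^ 2 ∂μ := by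
  set q : ℕ → ℝ := fun i => ∫ ω, Y i ω ^ 2 ∂μ with hq
  have hq0 : ∀ i, 0 ≤ q i := fun i => integral_nonneg fun ω => sq_nonneg _
  have hcov' : ∀ i ∈ Finset.Icc 1 n, ∀ j ∈ Finset.Icc 1 n, j ≠ i →
      cov[Y i, Y j; μ] ≤ c (Nat.dist i j) * q i + c (Nat.dist j i) * q j := by
    intro i hi j hj hne
    rw [Nat.dist_comm j i, ← mul_add]
    rcases lt_or_gt_of_ne hne with h | h
    · have := (le_abs_self _).trans (hcov j hj i hi h)
      rw [covariance_comm, Nat.dist_eq_sub_of_le_right h.le, add_comm (q i)]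
      exact this
    · have := (le_abs_self _).trans (hcov i hi j hj h)
      rw [Nat.dist_eq_sub_of_le h.le]
      exact this
  have hself : ∀ i ∈ Finset.Icc 1 n, cov[Y i, Y i; μ] ≤ q i := by
    intro i hi
    rw [covariance_self (hY i hi).aemeasurable]
    exact variance_le_expectation_sq (hY i hi).aestronglyMeasurable
  set I := Finset.Icc 1 n with hI
  rw [variance_fun_sum' hY]
  have hcomm : ∑ i ∈ I, ∑ j ∈ I with j ≠ i, c (Nat.dist j i) * q j
      = ∑ i ∈ I, ∑ j ∈ I with j ≠ i, c (Nat.dist i j) * q i := by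
    simp_rw [Finset.sum_filter]
    rw [Finset.sum_comm]
    refine Finset.sum_congr rfl fun i _ => Finset.sum_congr rfl fun j _ => ?_
    simp only [ne_comm]
  calc ∑ i ∈ I, ∑ j ∈ I, cov[Y i, Y j; μ]
      ≤ ∑ i ∈ I, (q i + ∑ j ∈ I with j ≠ i, (c (Nat.dist i j) * q i + c (Nat.dist j i) * q j)) := by
        refine Finset.sum_le_sum fun i hi => ?_
        rw [← Finset.add_sum_erase _ _ hi, ← Finset.filter_ne']
        refine add_le_add (hself i hi) (Finset.sum_le_sum fun j hj => ?_)
        exact hcov' i hi j (Finset.mem_filter.1 hj).1 (Finset.mem_filter.1 hj).2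
    _ = ∑ i ∈ I, (1 + 2 * ∑ j ∈ I with j ≠ i, c (Nat.dist i j)) * q i := by
        simp_rw [Finset.sum_add_distrib]
        rw [hcomm]
        simp_rw [add_mul, one_mul, Finset.sum_add_distrib, mul_assoc, Finset.sum_mul,
          ← Finset.mul_sum]
        ring
    _ ≤ ∑ i ∈ I, (1 + 4 * ∑' m, c (m + 1)) * q i := by
        refine Finset.sum_le_sum fun i _ => mul_le_mul_of_nonneg_right ?_ (hq0 i)
        linarith [sum_comp_dist_le hc hs n i]
    _ = _ := by rw [Finset.mul_sum]

end Variance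

/-- Truncation of a real number at level `t` in absolute value. -/
noncomputable def truncAbs (t z : ℝ) : ℝ := if |z| ≤ t then z else 0

section Truncation

theorem measurable_truncAbs (t : ℝ) : Measurable (truncAbs t) :=
  Measurable.ite (measurableSet_le measurable_id.abs measurable_const) measurable_id
    measurable_const

theorem measurable_rpow_mul_truncAbs_sq {Ω : Type*} [MeasurableSpace Ω] {Z : Ω → ℝ}
    (hZ : Measurable Z) (p : ℝ) : Measurable fun q : ℝ × Ω =>
      ENNReal.ofReal (q.1 ^ p * truncAbs q.1 (Z q.2) ^ 2) := by
  have htr : Measurable fun q : ℝ × Ω => truncAbs q.1 (Z q.2) :=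
    Measurable.ite (measurableSet_le (hZ.comp measurable_snd).abs measurable_fst)
      (hZ.comp measurable_snd) measurable_const
  exact ((measurable_fst.pow_const _).mul (htr.pow_const 2)).ennreal_ofReal

theorem truncAbs_of_le {t z : ℝ} (h : |z| ≤ t) : truncAbs t z = z := if_pos h

theorem truncAbs_of_lt {t z : ℝ} (h : t < |z|) : truncAbs t z = 0 := if_neg (not_le.2 h)

theorem abs_truncAbs_le {t : ℝ} (ht : 0 ≤ t) (z : ℝ) : |truncAbs t z| ≤ t := by
  rcases le_or_gt |z| t with h | h
  · rwa [truncAbs_of_le h]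
  · rwa [truncAbs_of_lt h, abs_zero]

theorem abs_truncAbs_sub_le {t s : ℝ} (ht : 0 < t) (hs : 1 ≤ s) (z : ℝ) :
    |truncAbs t z - z| ≤ t ^ (1 - s) * |z| ^ s := by
  rcases le_or_gt |z| t with h | h
  · rw [truncAbs_of_le h, sub_self, abs_zero]
    positivity
  · have hz : 0 < |z| := ht.trans h
    rw [truncAbs_of_lt h, zero_sub, abs_neg]
    calc |z| = |z| ^ (1 - s) * |z| ^ s := by
          rw [← Real.rpow_add hz, sub_add_cancel, Real.rpow_one]
      _ ≤ _ := by
          refine mul_le_mul_of_nonneg_right ?_ (by positivity)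
          exact Real.rpow_le_rpow_of_nonpos ht h.le (by linarith)

theorem lintegral_rpow_mul_truncAbs_sq {s : ℝ} (hs0 : 0 < s) (hs2 : s < 2) (z : ℝ) :
    ∫⁻ t in Set.Ioi (0 : ℝ), ENNReal.ofReal (t ^ (s - 3) * truncAbs t z ^ 2)
      = ENNReal.ofReal (|z| ^ s / (2 - s)) := by
  rcases eq_or_ne z 0 with rfl | hz
  · simp [truncAbs, Real.zero_rpow hs0.ne']
  have hz' : 0 < |z| := abs_pos.2 hz
  have hind : ∀ t : ℝ, ENNReal.ofReal (t ^ (s - 3) * truncAbs t z ^ 2)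
      = (Set.Ici |z|).indicator (fun t => ENNReal.ofReal (t ^ (s - 3) * z ^ 2)) t := by
    intro t
    rcases le_or_gt |z| t with h | h
    · rw [truncAbs_of_le h, Set.indicator_of_mem (Set.mem_Ici.2 h)]
    · rw [truncAbs_of_lt h, Set.indicator_of_notMem (by simpa using h)]
      simp
  simp_rw [hind]
  rw [lintegral_indicator measurableSet_Ici, Measure.restrict_restrict measurableSet_Ici,
    Set.inter_eq_left.2 (Set.Ici_subset_Ioi.2 hz'),
    ← restrict_Ioi_eq_restrict_Ici]
  have hlt : s - 3 < -1 := by linarith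
  rw [← ofReal_integral_eq_lintegral_ofReal
    ((integrableOn_Ioi_rpow_of_lt hlt hz').mul_const _)]
  · rw [integral_mul_const, integral_Ioi_rpow_of_lt hlt hz']
    congr 1
    have h1 : |z| ^ s = |z| ^ (s - 3 + 1) * z ^ 2 := by
      rw [← sq_abs z, ← Real.rpow_natCast, ← Real.rpow_add hz']
      congr 1
      push_cast
      ring
    have h2 : 2 - s ≠ 0 := by linarith
    have h3 : s - 3 + 1 ≠ 0 := by linarith
    rw [h1]
    field_simp
    ring
  · refine (ae_restrict_mem measurableSet_Ioi).mono fun t ht => ?_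
    have : 0 < t := hz'.trans ht
    change 0 ≤ t ^ (s - 3) * z ^ 2
    positivity

end Truncation

section TailIntegration

variable {Ω ι : Type*} [MeasurableSpace Ω] {μ : Measure Ω} [IsProbabilityMeasure μ]

theorem lintegral_lintegral_truncAbs_sq {s : ℝ} (hs0 : 0 < s) (hs2 : s < 2) {Z : Ω → ℝ}
    (hZ : Measurable Z) :
    ∫⁻ t in Set.Ioi (0 : ℝ), ∫⁻ ω, ENNReal.ofReal (t ^ (s - 3) * truncAbs t (Z ω) ^ 2) ∂μ
      = ∫⁻ ω, ENNReal.ofReal (|Z ω| ^ s / (2 - s)) ∂μ := by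
  rw [lintegral_lintegral_swap]
  · simp_rw [lintegral_rpow_mul_truncAbs_sq hs0 hs2]
  · exact (measurable_rpow_mul_truncAbs_sq hZ (s - 3)).aemeasurable

/-- Truncation at level `t` and Chebyshev's inequality for a sum of centred variables. -/
theorem measure_lt_abs_sum_le {I : Finset ι} {Z : ι → Ω → ℝ} {s ε t K : ℝ}
    (hs1 : 1 < s) (hε : 0 < ε) (ht : 0 < t)
    (hZ : ∀ k, Measurable (Z k)) (hint : ∀ k ∈ I, Integrable (Z k) μ)
    (hmean : ∀ k ∈ I, ∫ ω, Z k ω ∂μ = 0)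
    (hmom : ∀ k ∈ I, Integrable (fun ω => |Z k ω| ^ s) μ)
    (hM : (1 + ε) * ∑ k ∈ I, ∫ ω, |Z k ω| ^ s ∂μ ≤ t ^ s)
    (hvar : Var[fun ω => ∑ k ∈ I, truncAbs t (Z k ω); μ]
      ≤ K * ∑ k ∈ I, ∫ ω, truncAbs t (Z k ω) ^ 2 ∂μ) :
    μ {ω | t < |∑ k ∈ I, Z k ω|} ≤ ∑ k ∈ I, μ {ω | t < |Z k ω|}
      + ENNReal.ofReal (K * (1 - (1 + ε)⁻¹)⁻¹ ^ 2 * t ^ (-2 : ℝ)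
          * ∑ k ∈ I, ∫ ω, truncAbs t (Z k ω) ^ 2 ∂μ) := by
  have hYm : ∀ k, Measurable fun ω => truncAbs t (Z k ω) :=
    fun k => (measurable_truncAbs t).comp (hZ k)
  have hYi : ∀ k ∈ I, Integrable (fun ω => truncAbs t (Z k ω)) μ := fun k _ =>
    Integrable.of_bound (hYm k).aestronglyMeasurable t
      (Filter.Eventually.of_forall fun ω => abs_truncAbs_le ht.le _)
  have hSL : MemLp (fun ω => ∑ k ∈ I, truncAbs t (Z k ω)) 2 μ :=
    memLp_finsetSum _ fun k _ => MemLp.of_bound (hYm k).aestronglyMeasurable t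
      (Filter.Eventually.of_forall fun ω => abs_truncAbs_le ht.le _)
  have hmeanY : |∫ ω, ∑ k ∈ I, truncAbs t (Z k ω) ∂μ| ≤ t * (1 + ε)⁻¹ := by
    rw [integral_finsetSum _ hYi]
    calc |∑ k ∈ I, ∫ ω, truncAbs t (Z k ω) ∂μ|
        ≤ ∑ k ∈ I, |∫ ω, truncAbs t (Z k ω) ∂μ| := Finset.abs_sum_le_sum_abs _ _
      _ ≤ ∑ k ∈ I, t ^ (1 - s) * ∫ ω, |Z k ω| ^ s ∂μ := by
          refine Finset.sum_le_sum fun k hk => ?_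
          rw [← integral_const_mul]
          calc |∫ ω, truncAbs t (Z k ω) ∂μ| = |∫ ω, (truncAbs t (Z k ω) - Z k ω) ∂μ| := by
                rw [integral_sub (hYi k hk) (hint k hk), hmean k hk, sub_zero]
            _ ≤ ∫ ω, |truncAbs t (Z k ω) - Z k ω| ∂μ := abs_integral_le_integral_abs
            _ ≤ _ := integral_mono ((hYi k hk).sub (hint k hk)).abs
                ((hmom k hk).const_mul _) fun ω => abs_truncAbs_sub_le ht hs1.le _
      _ = t ^ (1 - s) * ∑ k ∈ I, ∫ ω, |Z k ω| ^ s ∂μ := by rw [Finset.mul_sum]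
      _ ≤ t ^ (1 - s) * (t ^ s * (1 + ε)⁻¹) := by
          refine mul_le_mul_of_nonneg_left ?_ (by positivity)
          rw [← div_eq_mul_inv, le_div_iff₀ (by positivity), mul_comm]
          exact hM
      _ = t * (1 + ε)⁻¹ := by
          rw [← mul_assoc, ← Real.rpow_add ht, sub_add_cancel, Real.rpow_one]
  have hδ : 0 < 1 - (1 + ε)⁻¹ := sub_pos.2 (inv_lt_one_of_one_lt₀ (by linarith))
  have hsub : {ω | t < |∑ k ∈ I, Z k ω|} ⊆ (⋃ k ∈ I, {ω | t < |Z k ω|}) ∪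
      {ω | t * (1 - (1 + ε)⁻¹) ≤ |∑ k ∈ I, truncAbs t (Z k ω)
        - ∫ ω', ∑ k ∈ I, truncAbs t (Z k ω') ∂μ|} := by
    intro ω hω
    by_cases hex : ∃ k ∈ I, t < |Z k ω|
    · left
      simpa using hex
    · right
      push Not at hex
      have hω' : t < |∑ k ∈ I, Z k ω| := hω
      change t * (1 - (1 + ε)⁻¹) ≤ |∑ k ∈ I, truncAbs t (Z k ω)
        - ∫ ω', ∑ k ∈ I, truncAbs t (Z k ω') ∂μ|
      rw [Finset.sum_congr rfl fun k hk => truncAbs_of_le (hex k hk)]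
      have := abs_sub_abs_le_abs_sub (∑ k ∈ I, Z k ω) (∫ ω', ∑ k ∈ I, truncAbs t (Z k ω') ∂μ)
      linarith
  refine (measure_mono hsub).trans ((measure_union_le _ _).trans
    (add_le_add (measure_biUnion_finset_le _ _) ?_))
  refine (meas_ge_le_variance_div_sq hSL (mul_pos ht hδ)).trans (ENNReal.ofReal_le_ofReal ?_)
  calc _ ≤ (K * ∑ k ∈ I, ∫ ω, truncAbs t (Z k ω) ^ 2 ∂μ) / (t * (1 - (1 + ε)⁻¹)) ^ 2 := by
        gcongr
    _ = _ := by
        rw [Real.rpow_neg ht.le, Real.rpow_two, mul_pow, div_eq_mul_inv, mul_inv, inv_pow]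
        ring

/-- Moment bound of order `s ∈ (1, 2)` for a sum of centred variables whose truncated sums have
variance at most `K` times the sum of the truncated second moments. -/
theorem integral_abs_sum_rpow_le {I : Finset ι} {Z : ι → Ω → ℝ} {s ε K : ℝ}
    (hs1 : 1 < s) (hs2 : s < 2) (hε : 0 < ε) (hK : 0 ≤ K)
    (hZ : ∀ k, Measurable (Z k)) (hint : ∀ k ∈ I, Integrable (Z k) μ)
    (hmean : ∀ k ∈ I, ∫ ω, Z k ω ∂μ = 0)
    (hmom : ∀ k ∈ I, Integrable (fun ω => |Z k ω| ^ s) μ)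
    (hvar : ∀ t, 0 < t → Var[fun ω => ∑ k ∈ I, truncAbs t (Z k ω); μ]
      ≤ K * ∑ k ∈ I, ∫ ω, truncAbs t (Z k ω) ^ 2 ∂μ) :
    ∫ ω, |∑ k ∈ I, Z k ω| ^ s ∂μ
      ≤ (2 + ε + K * (1 - (1 + ε)⁻¹)⁻¹ ^ 2 * (s / (2 - s)))
        * ∑ k ∈ I, ∫ ω, |Z k ω| ^ s ∂μ := by
  have hs0 : 0 < s := by linarith
  have h2s : 0 < 2 - s := by linarith
  set M := ∑ k ∈ I, ∫ ω, |Z k ω| ^ s ∂μ with hMdef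
  set L := K * (1 - (1 + ε)⁻¹)⁻¹ ^ 2 with hL
  have hL0 : 0 ≤ L := by positivity
  have hm0 : ∀ k, 0 ≤ ∫ ω, |Z k ω| ^ s ∂μ := fun k => integral_nonneg fun ω => by positivity
  have hM0 : 0 ≤ M := Finset.sum_nonneg fun k _ => hm0 k
  have hSm : Measurable fun ω => |∑ k ∈ I, Z k ω| :=
    (Finset.measurable_fun_sum _ fun k _ => hZ k).abs
  set t₀ := ((1 + ε) * M) ^ s⁻¹ with ht₀
  have ht₀0 : 0 ≤ t₀ := by positivity
  have ht₀s : t₀ ^ s = (1 + ε) * M := by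
    rw [ht₀, ← Real.rpow_mul (by positivity), inv_mul_cancel₀ hs0.ne', Real.rpow_one]
  have hcake : ∀ f : Ω → ℝ, (∀ ω, 0 ≤ f ω) → Measurable f →
      ENNReal.ofReal s * ∫⁻ t in Set.Ioi 0, μ {ω | t < f ω} * ENNReal.ofReal (t ^ (s - 1))
        = ∫⁻ ω, ENNReal.ofReal (f ω ^ s) ∂μ := fun f hf hfm =>
    (lintegral_rpow_eq_lintegral_meas_lt_mul μ (Filter.Eventually.of_forall hf)
      hfm.aemeasurable hs0).symm
  have hmeasure : ∀ f : Ω → ℝ,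
      Measurable fun t : ℝ => μ {ω | t < f ω} * ENNReal.ofReal (t ^ (s - 1)) := by
    intro f
    refine Measurable.mul (Antitone.measurable fun a b hab => ?_) (by fun_prop)
    exact measure_mono fun ω hω => lt_of_le_of_lt hab hω
  have hpoint : ∀ t ∈ Set.Ioi (0 : ℝ),
      μ {ω | t < |∑ k ∈ I, Z k ω|} * ENNReal.ofReal (t ^ (s - 1))
        ≤ μ {_ω : Ω | t < t₀} * ENNReal.ofReal (t ^ (s - 1))
          + (∑ k ∈ I, μ {ω | t < |Z k ω|} * ENNReal.ofReal (t ^ (s - 1))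
          + ENNReal.ofReal L
            * ∑ k ∈ I, ∫⁻ ω, ENNReal.ofReal (t ^ (s - 3) * truncAbs t (Z k ω) ^ 2) ∂μ) := by
    intro t ht
    have ht' : 0 < t := ht
    rcases lt_or_ge t t₀ with hlt | hge
    · have huniv : {_ω : Ω | t < t₀} = Set.univ := Set.eq_univ_of_forall fun _ => hlt
      rw [huniv]
      exact le_add_right (mul_le_mul_left (measure_mono (Set.subset_univ _)) _)
    · refine le_add_left ?_
      have htail := measure_lt_abs_sum_le hs1 hε ht' hZ hint hmean hmom
        (ht₀s.symm.trans_le (Real.rpow_le_rpow ht₀0 hge hs0.le)) (hvar t ht')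
      refine (mul_le_mul_left htail _).trans_eq ?_
      rw [add_mul, Finset.sum_mul]
      congr 1
      have hsq : ∀ k, Integrable (fun ω => t ^ (s - 3) * truncAbs t (Z k ω) ^ 2) μ := fun k =>
        Integrable.const_mul (Integrable.of_bound
          (((measurable_truncAbs t).comp (hZ k)).pow_const 2).aestronglyMeasurable (t ^ 2)
          (Filter.Eventually.of_forall fun ω => by
            rw [Real.norm_eq_abs, abs_pow]
            exact pow_le_pow_left₀ (abs_nonneg _) (abs_truncAbs_le ht'.le _) 2)) _
      have hterm : ∀ k, ∫⁻ ω, ENNReal.ofReal (t ^ (s - 3) * truncAbs t (Z k ω) ^ 2) ∂μ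
          = ENNReal.ofReal (t ^ (s - 3) * ∫ ω, truncAbs t (Z k ω) ^ 2 ∂μ) := fun k => by
        rw [← ofReal_integral_eq_lintegral_ofReal (hsq k)
          (Filter.Eventually.of_forall fun ω => by positivity), integral_const_mul]
      have hnn : ∀ k, 0 ≤ ∫ ω, truncAbs t (Z k ω) ^ 2 ∂μ :=
        fun k => integral_nonneg fun ω => sq_nonneg _
      simp_rw [hterm]
      rw [← ENNReal.ofReal_sum_of_nonneg fun k _ => mul_nonneg (by positivity) (hnn k),
        ← ENNReal.ofReal_mul hL0, ← ENNReal.ofReal_mul' (by positivity), ← Finset.mul_sum]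
      congr 1
      have : t ^ (s - 3) = t ^ (-2 : ℝ) * t ^ (s - 1) := by
        rw [← Real.rpow_add ht']
        congr 1
        ring
      rw [this]
      ring
  have hmk : ∀ k ∈ I, ∫⁻ ω, ENNReal.ofReal (|Z k ω| ^ s) ∂μ
      = ENNReal.ofReal (∫ ω, |Z k ω| ^ s ∂μ) := fun k hk =>
    (ofReal_integral_eq_lintegral_ofReal (hmom k hk)
      (Filter.Eventually.of_forall fun ω => by positivity)).symm
  have hmk' : ∀ k ∈ I, ∫⁻ ω, ENNReal.ofReal (|Z k ω| ^ s / (2 - s)) ∂μ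
      = ENNReal.ofReal ((∫ ω, |Z k ω| ^ s ∂μ) / (2 - s)) := fun k hk => by
    rw [← integral_div]
    exact (ofReal_integral_eq_lintegral_ofReal ((hmom k hk).div_const _)
      (Filter.Eventually.of_forall fun ω => by positivity)).symm
  have hinner : ∀ k, Measurable fun t : ℝ =>
      ∫⁻ ω, ENNReal.ofReal (t ^ (s - 3) * truncAbs t (Z k ω) ^ 2) ∂μ :=
    fun k => (measurable_rpow_mul_truncAbs_sq (hZ k) (s - 3)).lintegral_prod_right'
  rw [integral_eq_lintegral_of_nonneg_ae (Filter.Eventually.of_forall fun ω => by positivity)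
    (hSm.pow_const s).aestronglyMeasurable]
  refine ENNReal.toReal_le_of_le_ofReal (by positivity) ?_
  rw [← hcake _ (fun ω => abs_nonneg _) hSm]
  calc _ ≤ ENNReal.ofReal s * ∫⁻ t in Set.Ioi 0,
        (μ {_ω : Ω | t < t₀} * ENNReal.ofReal (t ^ (s - 1))
          + (∑ k ∈ I, μ {ω | t < |Z k ω|} * ENNReal.ofReal (t ^ (s - 1))
          + ENNReal.ofReal L
            * ∑ k ∈ I, ∫⁻ ω, ENNReal.ofReal (t ^ (s - 3) * truncAbs t (Z k ω) ^ 2) ∂μ)) :=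
        mul_le_mul_right (setLIntegral_mono' measurableSet_Ioi hpoint) _
    _ = ENNReal.ofReal ((1 + ε) * M) + (∑ k ∈ I, ENNReal.ofReal (∫ ω, |Z k ω| ^ s ∂μ)
          + ENNReal.ofReal s * (ENNReal.ofReal L
            * ∑ k ∈ I, ENNReal.ofReal ((∫ ω, |Z k ω| ^ s ∂μ) / (2 - s)))) := by
        rw [lintegral_add_left (hmeasure fun _ => t₀),
          lintegral_add_left (Finset.measurable_fun_sum _ fun k _ => hmeasure _),
          lintegral_finsetSum _ fun k _ => hmeasure _,
          lintegral_const_mul _ (Finset.measurable_fun_sum _ fun k _ => hinner k),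
          lintegral_finsetSum _ fun k _ => hinner k, mul_add, mul_add,
          hcake (fun _ => t₀) (fun _ => ht₀0) measurable_const, Finset.mul_sum, ht₀s]
        congr 1
        · simp
        congr 1
        · refine Finset.sum_congr rfl fun k hk => ?_
          rw [hcake _ (fun ω => abs_nonneg _) (hZ k).abs, hmk k hk]
        · congr 2
          refine Finset.sum_congr rfl fun k hk => ?_
          rw [lintegral_lintegral_truncAbs_sq hs0 hs2 (hZ k), hmk' k hk]
    _ = ENNReal.ofReal ((1 + ε) * M + (M + s * (L * (M / (2 - s))))) := by
        rw [← ENNReal.ofReal_sum_of_nonneg fun k _ => hm0 k,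
          ← ENNReal.ofReal_sum_of_nonneg fun k _ => div_nonneg (hm0 k) h2s.le,
          ← Finset.sum_div, ← ENNReal.ofReal_mul hL0, ← ENNReal.ofReal_mul hs0.le,
          ← ENNReal.ofReal_add hM0 (by positivity),
          ← ENNReal.ofReal_add (by positivity) (by positivity)]
    _ = _ := by
        congr 1
        ring

end TailIntegration

section TailPart

variable {Ω : Type*} [MeasurableSpace Ω] {μ : Measure Ω} {X : ℕ → Ω → ℝ} {b : ℝ} {k : ℕ}

theorem measurable_tail_fun (b : ℝ) : Measurable fun x : ℝ => if b < |x| then x else 0 :=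
  Measurable.ite (measurableSet_lt measurable_const measurable_id.abs) measurable_id
    measurable_const

theorem memLp_tail {p : ENNReal} (hX : Measurable (X k)) (h : MemLp (X k) p μ) :
    MemLp (fun ω => if b < |X k ω| then X k ω else 0) p μ := by
  refine h.mono ((measurable_tail_fun b).comp hX).aestronglyMeasurable
    (Filter.Eventually.of_forall fun ω => ?_)
  split_ifs <;> simp

theorem memLp_tailPart [IsFiniteMeasure μ] {p : ENNReal} (hX : Measurable (X k))
    (h : MemLp (X k) p μ) : MemLp (tailPart μ X b k) p μ :=
  (memLp_tail hX h).sub (memLp_const _)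

theorem integral_tailPart [IsProbabilityMeasure μ] (hX : Measurable (X k))
    (h : Integrable (X k) μ) : ∫ ω, tailPart μ X b k ω ∂μ = 0 := by
  have hi := memLp_one_iff_integrable.1 (memLp_tail (b := b) hX (memLp_one_iff_integrable.2 h))
  unfold tailPart
  rw [integral_sub hi (integrable_const _)]
  simp

end TailPart

/-- inequality (7) in the proof of Lemma 1: for every `ε > 0`,
`E|∑_{k=1}^n Z_k|^{1+α} ≤ f(ε) · M_n` with
`f(ε) = 2 + ε + (1+4φ)·(1−(1+ε)⁻¹)⁻²·4/(1−α)²`, where `φ = ∑_{m≥1} φ(m)^{1/2}`. -/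
theorem tail_moment_bound_f_eps
    {Ω : Type*} [MeasurableSpace Ω] (μ : Measure Ω) [IsProbabilityMeasure μ]
    (X : ℕ → Ω → ℝ) (hmeas : ∀ n, Measurable (X n))
    (r C : ℝ) (hr : 2 < r) (hC : 0 < C)
    (hmix : ∀ m : ℕ, 1 ≤ m → phiCoef μ X m ≤ C * ((m : ℝ) + 1) ^ (-r))
    (α : ℝ) (hα0 : 0 < α) (hα1 : α < 1)
    (hint : ∀ n : ℕ, 1 ≤ n → Integrable (fun ω => |X n ω| ^ (1 + α)) μ)
    (hνpos : 0 < ⨆ n : ℕ, ∫ ω, |X (n + 1) ω| ^ (1 + α) ∂μ)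
    (hbdd : BddAbove (Set.range fun n : ℕ => ∫ ω, |X (n + 1) ω| ^ (1 + α) ∂μ))
    (b : ℝ) (hb : 0 < b) (n : ℕ) (hn : 1 ≤ n)
    (s Mn φ : ℝ) (hs : s = 1 + α) (hφ : φ = phiSum μ X)
    (hMn : Mn = ∑ k ∈ Finset.Icc 1 n, ∫ ω, |tailPart μ X b k ω| ^ s ∂μ) :
    ∀ ε : ℝ, 0 < ε →
      ∫ ω, |∑ k ∈ Finset.Icc 1 n, tailPart μ X b k ω| ^ (1 + α) ∂μ ≤
        (2 + ε + (1 + 4 * φ) * (1 - (1 + ε)⁻¹)⁻¹ ^ (2:ℕ) * (4 / (1 - α) ^ (2:ℕ))) * Mn := by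
  intro ε hε
  subst hs hφ hMn
  have hp0 : ENNReal.ofReal (1 + α) ≠ 0 := by simpa using by linarith
  have hp1 : (1 : ENNReal) ≤ ENNReal.ofReal (1 + α) := by
    rw [← ENNReal.ofReal_one]
    exact ENNReal.ofReal_le_ofReal (by linarith)
  have hpr : (ENNReal.ofReal (1 + α)).toReal = 1 + α := ENNReal.toReal_ofReal (by linarith)
  have hXL : ∀ k ∈ Finset.Icc 1 n, MemLp (X k) (ENNReal.ofReal (1 + α)) μ := by
    intro k hk
    rw [← integrable_norm_rpow_iff (hmeas k).aestronglyMeasurable hp0 ENNReal.ofReal_ne_top, hpr]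
    exact hint k (Finset.mem_Icc.1 hk).1
  have hZm : ∀ k, Measurable (tailPart μ X b k) := fun k =>
    ((measurable_tail_fun b).comp (hmeas k)).sub_const _
  have hphi := summable_sqrt_phiCoef μ X hr hmix
  have hφ0 : 0 ≤ phiSum μ X := tsum_nonneg fun _ => Real.sqrt_nonneg _
  have hmain := integral_abs_sum_rpow_le (μ := μ) (I := Finset.Icc 1 n) (Z := tailPart μ X b)
    (s := 1 + α) (ε := ε) (K := 1 + 4 * phiSum μ X) (by linarith) (by linarith) hε
    (by positivity) hZm
    (fun k hk => (memLp_tailPart (hmeas k) (hXL k hk)).integrable hp1)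
    (fun k hk => integral_tailPart (hmeas k) ((hXL k hk).integrable hp1))
    (fun k hk => by
      have := (memLp_tailPart (b := b) (hmeas k) (hXL k hk)).integrable_norm_rpow hp0
        ENNReal.ofReal_ne_top
      rwa [hpr] at this)
    (fun t ht => by
      have hbound : ∀ k ω, |truncAbs t (tailPart μ X b k ω)| ≤ t :=
        fun k ω => abs_truncAbs_le ht.le _
      have hYm : ∀ k, Measurable fun ω => truncAbs t (tailPart μ X b k ω) :=
        fun k => (measurable_truncAbs t).comp (hZm k)
      refine variance_sum_le_of_covariance_le
        (Y := fun k ω => truncAbs t (tailPart μ X b k ω))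
        (c := fun m => √(phiCoef μ X m)) (fun _ => Real.sqrt_nonneg _) hphi n
        (fun k _ => MemLp.of_bound (hYm k).aestronglyMeasurable t
          (Filter.Eventually.of_forall (hbound k))) ?_
      intro i hi j _ hij
      have hdep := (phiDependent_phiCoef μ X (Finset.mem_Icc.1 hi).1 hij).comp
        ((measurable_truncAbs t).comp ((measurable_tail_fun b).sub_const
          (∫ ω', (if b < |X i ω'| then X i ω' else 0) ∂μ)))
        ((measurable_truncAbs t).comp ((measurable_tail_fun b).sub_const
          (∫ ω', (if b < |X j ω'| then X j ω' else 0) ∂μ)))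
      exact PhiDependent.abs_covariance_le (phiCoef_nonneg μ X _) hdep (hYm i) (hYm j)
        (hbound i) (hbound j))
  refine hmain.trans (mul_le_mul_of_nonneg_right ?_
    (Finset.sum_nonneg fun k _ => integral_nonneg fun ω => by positivity))
  have hα : 0 < 1 - α := by linarith
  have hconst : (1 + α) / (2 - (1 + α)) ≤ 4 / (1 - α) ^ 2 := by
    rw [show 2 - (1 + α) = 1 - α by ring, div_le_div_iff₀ hα (by positivity)]
    nlinarith [mul_pos hα hα, mul_pos hα hα0, mul_pos hα (mul_pos hα0 hα0)]
  gcongr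
end
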